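/- arXiv:1807.00354 — 3 statements merged into one kernel-verified Lean document; each statement's English description precedes it below -/
import Mathlib

section
/- Let G be a finitely generated group of polynomial volume growth and let μ = ∑_{i=0}^k p_i μ_i belong to P(G,reg), with subgroups H_i, word lengths |·|_i, growth degrees d_i, and increasing regularly varying functions φ_i as in the definition; fix ε > 0 such that S_ε = {g ∈ G : μ(g) > ε} generates G and contains e, and let |·|_0 be the word length on G with respect to S_ε. Set Φ_0(t) = max{t, t²}, and for 1 ≤ i ≤ k set Φ_i(t) = t²/∫₀ᵗ (2s/φ_i(s)) ds for t ≥ 1, extended linearly on [0,1] with Φ_i(0) = 0. For r ≥ 1 put K_i(r) = {h ∈ H_i : Φ_i(|h|_i) ≤ r} for 1 ≤ i ≤ k, K_0(r) = {h ∈ G : Φ_0(|h|_0) ≤ r}, and for a fixed integer Q ≥ 1 put K(r) = {g₁⋯g_Q : each g_j ∈ ∪_{i=0}^k K_i(r)}. Assume 𝐅 : [1,∞) → (0,∞) is increasing, unbounded and regularly varying at infinity of positive index, with #K(r) ≥ 𝐅(r) for all r ≥ 1, and set 𝐅^{-1}(v) = inf{t ≥ 1 : 𝐅(t) ≥ v}.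 Then there exist constants c₁, c₂, c₃, c₄ > 0 such that Λ_{2,G,μ}(v) ≥ c₁/𝐅^{-1}(c₂ v) for all v ≥ 1, and μ^{(n)}(e) ≤ c₃/𝐅(max{c₄ n, 1}) for all integers n ≥ 1. -/
/-!
For `f ∈ ℓ²(G)` the displacement `N h = ‖f(· h) - f‖₂` is a norm on the group `G`, and the Dirichlet
form is `½ ∑ μ(h) N(h)²`. Everything follows from bounding `N h` by this energy for `h ∈ K(r)`.

* Pseudo-Poincaré (`pseudo_poincare`): `N(h)² ≤ C Φ_i(|h|_i) ∑ μ_i N²` for `h ∈ H_i`. At each dyadic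
  scale `2 ^ j ≤ |h|_i`, a word for `h` is cut into pieces of length `2 ^ j`
  (`IsGroupNorm.chain_le`), and `N²` of each piece is bounded by its average over a ball
  (`IsGroupNorm.ball_average`). The bounds at all scales are added with the weights
  `4 ^ j / φ_i(2 ^ j)`, whose sum is comparable with the integral defining `Φ_i`; since `φ_i` has
  positive index, the contributions of the larger scales at a fixed group element decay
  geometrically, so that the sum is bounded by the `μ_i`-energy (`scale_sum_le`).
  `pseudo_poincare_generators` is the elementary analogue for `|·|_0`.
* Nash inequality: by the triangle inequality for `N`, `N(h)² ≤ C r ∑ μ N²` for `h ∈ K(r)`.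
  Averaging over at least `F r` such elements (`card_mul_norm_sq_le`) gives
  `‖f‖₂² ≤ C r ∑ μ N² + ‖f‖₁² / F r`.
* Spectral profile (`finv_spectral_le`): if `f` is supported on at most `v` points, Cauchy–Schwarz
  gives `‖f‖₁² ≤ v ‖f‖₂²`, and `F r ≥ 2 v` absorbs the last term.
* Return probability (`return_probability_le`): `u_n = ‖μ^{(n)}‖₂² = μ^{(2n)}(1)` decreases by at
  least `μ(1)` times the energy of `μ^{(n)}` at each step (`norm_markov_sq_le`), so `u` satisfies a
  discrete Nash-type inequality, and `decay_of_nash` integrates it using the doubling of `F`.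
-/

open scoped BigOperators Classical

noncomputable section

/-- A symmetric probability measure on a discrete group `G`. -/
def IsSymmProb {G : Type*} [Group G] (μ : G → ℝ) : Prop :=
  (∀ g, 0 ≤ μ g) ∧ Summable μ ∧ (∑' g, μ g) = 1 ∧ (∀ g, μ g⁻¹ = μ g)

/-- Convolution powers of `μ` : `convPow μ 0 = δ_e`, `convPow μ (n+1) = (convPow μ n) * μ`. -/
def convPow {G : Type*} [Group G] (μ : G → ℝ) : ℕ → G → ℝ
  | 0 => fun x => if x = 1 then 1 else 0
  | n + 1 => fun x => ∑' y, convPow μ n y * μ (y⁻¹ * x)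

/-- The Dirichlet form of `μ`. -/
def dirichletForm {G : Type*} [Group G] (μ : G → ℝ) (f : G → ℝ) : ℝ :=
  (1 / 2) * ∑' q : G × G, (f (q.1 * q.2) - f q.1) ^ 2 * μ q.2

/-- The spectral profile `Λ_{2,G,μ}`. -/
def spectralProfile {G : Type*} [Group G] (μ : G → ℝ) (v : ℝ) : ℝ :=
  sInf { r : ℝ | ∃ f : G → ℝ, 1 ≤ (Function.support f).ncard ∧
    ((Function.support f).ncard : ℝ) ≤ v ∧
    r = dirichletForm μ f / ∑' x, (f x) ^ 2 }

/-- Word length with respect to a set `S` of generators. -/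
def wordLength {G : Type*} [Group G] (S : Set G) (g : G) : ℕ :=
  sInf { n : ℕ | ∃ l : List G, l.length = n ∧ (∀ x ∈ l, x ∈ S) ∧ l.prod = g }

/-- `F` is regularly varying at infinity of index `γ`. -/
def RegVaryAt (F : ℝ → ℝ) (γ : ℝ) : Prop :=
  ∀ l : ℝ, 0 < l →
    Filter.Tendsto (fun t => F (l * t) / F t) Filter.atTop (nhds (l ^ γ))

/-- `G` is finitely generated of polynomial volume growth. -/
def HasPolyGrowth (G : Type*) [Group G] : Prop :=
  ∃ (S : Finset G) (D c C : ℝ), (∀ s ∈ S, s⁻¹ ∈ S) ∧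
    Subgroup.closure (S : Set G) = ⊤ ∧ 0 < c ∧ c ≤ C ∧
    ∀ r : ℝ, 1 ≤ r →
      c * r ^ D ≤ (({g : G | (wordLength (S : Set G) g : ℝ) ≤ r}).ncard : ℝ) ∧
      (({g : G | (wordLength (S : Set G) g : ℝ) ≤ r}).ncard : ℝ) ≤ C * r ^ D

/-- A norm on the group `G`. -/
def IsGroupNorm {G : Type*} [Group G] (N : G → ℝ) : Prop :=
  (∀ g, 0 ≤ N g) ∧ N 1 = 0 ∧ (∀ g, N g⁻¹ = N g) ∧ ∀ g h, N (g * h) ≤ N g + N h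

/-- A quasi-norm on the group `G`, with quasi-triangle constant `A`. -/
def IsQuasiNorm {G : Type*} [Group G] (N : G → ℝ) (A : ℝ) : Prop :=
  1 ≤ A ∧ (∀ g, 0 ≤ N g) ∧ N 1 = 0 ∧ (∀ g, N g⁻¹ = N g) ∧
    ∀ g h, N (g * h) ≤ A * (N g + N h)

/-- `f ⪯ g` in a neighborhood of infinity. -/
def Preceq (f g : ℝ → ℝ) : Prop :=
  ∃ c₁ c₂ M : ℝ, 0 < c₁ ∧ 0 < c₂ ∧ ∀ x, M ≤ x → f x ≤ c₁ * g (c₂ * x)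

/-- `Φ(t) = t²/∫₀ᵗ 2s/φ(s) ds` for `t ≥ 1`, extended linearly on `[0,1]` with `Φ(0)=0`. -/
def PhiOf (φ : ℝ → ℝ) (t : ℝ) : ℝ :=
  if 1 ≤ t then t ^ 2 / (intervalIntegral (fun s => 2 * s / φ s) 0 t MeasureTheory.volume)
  else t * (1 / (intervalIntegral (fun s => 2 * s / φ s) 0 1 MeasureTheory.volume))

/-- Generalized right-continuous inverse `F⁻¹(v) = inf {t ≥ 1 : F(t) ≥ v}`. -/
def Finv (F : ℝ → ℝ) (v : ℝ) : ℝ := sInf { t : ℝ | 1 ≤ t ∧ v ≤ F t }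

/-- The set of products of exactly `Q` elements of `U`. -/
def prodSet {G : Type*} [Group G] (Q : ℕ) (U : Set G) : Set G :=
  { g | ∃ l : List G, l.length = Q ∧ (∀ x ∈ l, x ∈ U) ∧ l.prod = g }

/-- `K_i(r) = {h ∈ H_i : Φ_i(|h|_i) ≤ r}` for `i ≥ 1`. -/
def KsetI {G : Type*} [Group G] (H : Subgroup G) (S : Set G) (φ : ℝ → ℝ) (r : ℝ) :
    Set G :=
  {h : G | h ∈ H ∧ PhiOf φ (wordLength S h : ℝ) ≤ r}

/-- `K_0(r) = {h ∈ G : Φ_0(|h|_0) ≤ r}` with `Φ₀(t) = max{t,t²}`. -/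
def Kset0 {G : Type*} [Group G] (S0 : Set G) (r : ℝ) : Set G :=
  {h : G | max ((wordLength S0 h : ℝ)) ((wordLength S0 h : ℝ) ^ 2) ≤ r}

/-! ### Regular variation -/

section RegularVariation

/-- Monotone regularly varying functions are doubling. -/
lemma exists_doubling {F : ℝ → ℝ} {γ : ℝ} (hmono : MonotoneOn F (Set.Ici 1))
    (hpos : ∀ t : ℝ, 1 ≤ t → 0 < F t) (hreg : RegVaryAt F γ) :
    ∃ D : ℝ, 1 ≤ D ∧ ∀ t : ℝ, 1 ≤ t → F (2 * t) ≤ D * F t := by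
  have h1 := (hreg 2 two_pos).eventually_lt_const (lt_add_one ((2 : ℝ) ^ γ))
  obtain ⟨T, hT⟩ := Filter.eventually_atTop.1 h1
  set T' := max T 1
  have hT'1 : 1 ≤ T' := le_max_right _ _
  refine ⟨max ((2 : ℝ) ^ γ + 1) (F (2 * T') / F 1), ?_, fun t ht => ?_⟩
  · have : (0 : ℝ) ≤ 2 ^ γ := by positivity
    exact le_max_of_le_left (by linarith)
  · have hFt := hpos t ht
    rcases le_total T' t with h | h
    · have := hT t ((le_max_left _ _).trans h)
      rw [div_lt_iff₀ hFt] at this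
      exact this.le.trans (mul_le_mul_of_nonneg_right (le_max_left _ _) hFt.le)
    · have h2 : F (2 * t) ≤ F (2 * T') :=
        hmono (Set.mem_Ici.2 (by linarith)) (Set.mem_Ici.2 (by linarith)) (by linarith)
      have h3 : F 1 ≤ F t := hmono (Set.mem_Ici.2 le_rfl) (Set.mem_Ici.2 ht) ht
      have hF1 := hpos 1 le_rfl
      have h4 : 0 ≤ F (2 * T') / F 1 := (div_pos (hpos _ (by linarith)) hF1).le
      calc F (2 * t) ≤ F (2 * T') / F 1 * F 1 := by rwa [div_mul_cancel₀ _ hF1.ne']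
        _ ≤ F (2 * T') / F 1 * F t := mul_le_mul_of_nonneg_left h3 h4
        _ ≤ _ := mul_le_mul_of_nonneg_right (le_max_right _ _) hFt.le

/-- Regular variation of positive index forces geometric growth along powers of two, uniformly
in the starting scale. -/
lemma exists_dyadic_growth {φ : ℝ → ℝ} {γ : ℝ} (hγ : 0 < γ) (hmono : MonotoneOn φ (Set.Ici 1))
    (hpos : ∀ t : ℝ, 1 ≤ t → 0 < φ t) (hreg : RegVaryAt φ γ) :
    ∃ q K : ℝ, 1 < q ∧ 0 < K ∧ ∀ l m : ℕ, q ^ m * φ (2 ^ l) ≤ K * φ (2 ^ (l + m)) := by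
  have h2γ : (1 : ℝ) < 2 ^ γ := Real.one_lt_rpow one_lt_two hγ
  obtain ⟨q, hq1, hq2⟩ := exists_between h2γ
  have h1 := (hreg 2 two_pos).eventually_const_lt hq2
  obtain ⟨T, hT⟩ := Filter.eventually_atTop.1 h1
  obtain ⟨j0, hj0⟩ := pow_unbounded_of_one_lt T one_lt_two
  have hone : ∀ j : ℕ, (1 : ℝ) ≤ 2 ^ j := fun j => one_le_pow₀ one_le_two
  have hstep : ∀ j : ℕ, φ (2 ^ j) ≤ φ (2 ^ (j + 1)) := fun j =>
    hmono (hone _) (hone _) (pow_le_pow_right₀ one_le_two (Nat.le_succ j))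
  have hq0 : (0 : ℝ) < q := by linarith
  refine ⟨q, q ^ j0, hq1, by positivity, fun l m => ?_⟩
  induction m with
  | zero =>
    have : (1 : ℝ) ≤ q ^ j0 := one_le_pow₀ hq1.le
    have := hpos _ (hone l)
    simp only [pow_zero, one_mul, add_zero]
    nlinarith
  | succ m ih =>
    by_cases hc : l + m < j0
    · have hml : φ (2 ^ l) ≤ φ (2 ^ (l + (m + 1))) :=
        hmono (hone _) (hone _) (pow_le_pow_right₀ one_le_two (by omega))
      exact mul_le_mul (pow_le_pow_right₀ hq1.le (by omega)) hml (hpos _ (hone l)).le (by positivity)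
    · have hTj : T ≤ 2 ^ (l + m) :=
        hj0.le.trans (pow_le_pow_right₀ one_le_two (by omega))
      have := hT _ hTj
      rw [lt_div_iff₀ (hpos _ (hone _))] at this
      have e : (2 : ℝ) ^ (l + (m + 1)) = 2 * 2 ^ (l + m) := by ring
      rw [e]
      calc q ^ (m + 1) * φ (2 ^ l) = q * (q ^ m * φ (2 ^ l)) := by ring
        _ ≤ q * (q ^ j0 * φ (2 ^ (l + m))) := mul_le_mul_of_nonneg_left ih hq0.le
        _ = q ^ j0 * (q * φ (2 ^ (l + m))) := by ring
        _ ≤ _ := mul_le_mul_of_nonneg_left this.le (by positivity)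

lemma intervalIntegrable_weight {φ : ℝ → ℝ} (hpos : ∀ t : ℝ, 0 ≤ t → 0 < φ t)
    (hmono : MonotoneOn φ (Set.Ici 0)) {a b : ℝ} (ha : 0 ≤ a) (hb : 0 ≤ b) :
    IntervalIntegrable (fun s => 2 * s / φ s) MeasureTheory.volume a b := by
  have hsub : Set.uIcc a b ⊆ Set.Ici 0 := fun x hx => (le_min ha hb).trans hx.1
  have h1 : AntitoneOn (fun s => (φ s)⁻¹) (Set.uIcc a b) := fun x hx y hy hxy =>
    inv_anti₀ (hpos x (hsub hx)) (hmono (hsub hx) (hsub hy) hxy)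
  have h2 := h1.intervalIntegrable.continuousOn_mul (μ := MeasureTheory.volume)
    (f := fun s => (φ s)⁻¹) (g := fun s : ℝ => 2 * s) (by fun_prop)
  simpa only [div_eq_mul_inv] using h2

/-- Comparison of the integral in the definition of `PhiOf` with its dyadic sum. -/
lemma integral_weight_le {φ : ℝ → ℝ} (hpos : ∀ t : ℝ, 0 ≤ t → 0 < φ t)
    (hmono : MonotoneOn φ (Set.Ici 0)) (n : ℕ) :
    (∫ s in (0 : ℝ)..(2 ^ n), 2 * s / φ s) ≤
      2 / φ 0 + ∑ j ∈ Finset.range n, 4 * (4 ^ j / φ (2 ^ j)) := by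
  have key : ∀ a b : ℝ, 0 ≤ a → a ≤ b →
      (∫ s in a..b, 2 * s / φ s) ≤ (b - a) * (2 * b / φ a) := by
    intro a b ha hab
    have h := intervalIntegral.integral_mono_on hab
      (intervalIntegrable_weight hpos hmono ha (ha.trans hab))
      (intervalIntegrable_const (c := 2 * b / φ a)) (fun x hx => ?_)
    · simpa only [intervalIntegral.integral_const, smul_eq_mul] using h
    · have hx0 : 0 ≤ x := ha.trans hx.1
      exact div_le_div₀ (by linarith [hx.2]) (by linarith [hx.2]) (hpos a ha)
        (hmono ha hx0 hx.1)
  induction n with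
  | zero => simpa using key 0 1 le_rfl zero_le_one
  | succ n ih =>
    have h2 : (0 : ℝ) ≤ 2 ^ n := by positivity
    rw [← intervalIntegral.integral_add_adjacent_intervals
      (intervalIntegrable_weight hpos hmono le_rfl h2)
      (intervalIntegrable_weight hpos hmono h2 (by positivity)), Finset.sum_range_succ,
      ← add_assoc]
    refine add_le_add ih ((key _ _ h2 (pow_le_pow_right₀ one_le_two (Nat.le_succ n))).trans
      (le_of_eq ?_))
    have e : (4 : ℝ) ^ n = 2 ^ n * 2 ^ n := by rw [← mul_pow]; norm_num
    rw [e, Nat.succ_eq_add_one, pow_succ]; ring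

lemma integral_weight_pos {φ : ℝ → ℝ} (hpos : ∀ t : ℝ, 0 ≤ t → 0 < φ t)
    (hmono : MonotoneOn φ (Set.Ici 0)) {r : ℝ} (hr : 0 < r) :
    0 < ∫ s in (0 : ℝ)..r, 2 * s / φ s :=
  intervalIntegral.intervalIntegral_pos_of_pos_on
    (intervalIntegrable_weight hpos hmono le_rfl hr.le)
    (fun x hx => div_pos (by linarith [hx.1]) (hpos x hx.1.le)) hr

end RegularVariation

/-! ### Decay from a Nash inequality -/

section Decay

/-- A discrete Nash-type differential inequality with doubling profile `F` gives decay of order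
`1 / F`. -/
lemma decay_of_nash {F : ℝ → ℝ} (hmono : MonotoneOn F (Set.Ici 1))
    (hpos : ∀ t : ℝ, 1 ≤ t → 0 < F t) {D : ℝ} (hD1 : 1 ≤ D)
    (hD : ∀ t : ℝ, 1 ≤ t → F (2 * t) ≤ D * F t) {K : ℝ} (hK : 1 ≤ K) {u : ℕ → ℝ}
    (hu0 : ∀ n, 0 ≤ u n) (hu1 : u 0 ≤ 1) (hanti : ∀ n, u (n + 1) ≤ u n)
    (hnash : ∀ n, ∀ r : ℝ, 1 ≤ r → u n ≤ K * r * (u n - u (n + 1)) + 1 / F r) :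
    ∃ B δ : ℝ, 0 < B ∧ 0 < δ ∧ ∀ n : ℕ, 1 ≤ n → u n ≤ B / F (max (δ * n) 1) := by
  have hA : Antitone u := antitone_nat_of_succ_le hanti
  have hKD : 0 < 2 * K * D := by positivity
  -- with this `δ`, running from time `N` to `2N` gains a factor `D` unless `u` is already small
  set δ := 1 / (2 * K * D) with hδ
  have hδ0 : 0 < δ := by positivity
  have hδ1 : δ ≤ 1 := by
    rw [hδ, div_le_one hKD]; nlinarith
  have hδe : 2 * K * δ = 1 / D := by rw [hδ]; field_simp
  set B := max (2 * D) (F 2) with hB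
  have hB0 : 0 < B := lt_max_of_lt_left (by linarith)
  have hsmall : ∀ n : ℕ, δ * n ≤ 2 → u n ≤ B / F (max (δ * n) 1) := by
    intro n hn
    have h1 : u n ≤ 1 := (hA (Nat.zero_le n)).trans hu1
    have h2 : F (max (δ * n) 1) ≤ F 2 :=
      hmono (Set.mem_Ici.2 (le_max_right _ _)) (by norm_num [Set.mem_Ici]) (max_le hn one_le_two)
    have h3 := hpos (max (δ * n) 1) (le_max_right _ _)
    refine h1.trans ((one_le_div h3).2 (h2.trans (le_max_right _ _)))
  have hdouble : ∀ N : ℕ, 1 ≤ δ * N → 1 ≤ N →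
      u (2 * N) ≤ 2 / F (δ * N) ∨ u (2 * N) ≤ u N / D := by
    intro N hN hN1
    by_contra! hcon
    obtain ⟨hc1, hc2⟩ := hcon
    have hF := hpos _ hN
    have hterm : ∀ m ∈ Finset.range N,
        u (2 * N) ≤ 2 * K * (δ * N) * (u (N + m) - u (N + (m + 1))) := by
      intro m hm
      have hm' := Finset.mem_range.1 hm
      have h1 : u (2 * N) ≤ u (N + m) := hA (by omega)
      have h2 := hnash (N + m) (δ * N) hN
      have h3 : 2 * (1 / F (δ * N)) < u (2 * N) := by
        rw [mul_one_div]; exact hc1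
      rw [add_assoc] at h2
      linarith
    -- sum over `m < N`: the right-hand side telescopes
    have hsum := Finset.sum_le_sum hterm
    rw [← Finset.mul_sum, Finset.sum_range_sub' (fun m => u (N + m))] at hsum
    simp only [Finset.sum_const, Finset.card_range, nsmul_eq_mul, add_zero] at hsum
    have hNpos : (0 : ℝ) < N := by exact_mod_cast hN1
    have h4 : (N : ℝ) * u (2 * N) ≤ N * (u N / D) := by
      have e : 2 * K * (δ * N) * (u N - u (N + N)) = N * ((1 / D) * (u N - u (N + N))) := by
        rw [← hδe]; ring
      rw [e] at hsum
      refine hsum.trans (mul_le_mul_of_nonneg_left ?_ hNpos.le)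
      rw [show u N / D = 1 / D * u N by ring]
      exact mul_le_mul_of_nonneg_left (sub_le_self _ (hu0 _)) (by positivity)
    exact absurd (le_of_mul_le_mul_left h4 hNpos) (not_le.2 hc2)
  have hdy : ∀ j : ℕ, u (2 ^ j) ≤ B / F (max (δ * (2 ^ j : ℕ)) 1) := by
    intro j
    induction j with
    | zero => exact hsmall _ (by simp; linarith)
    | succ j ih =>
      rcases le_total (δ * (2 ^ (j + 1) : ℕ)) 2 with h | h
      · exact hsmall _ h
      · have e : δ * ((2 ^ (j + 1) : ℕ) : ℝ) = 2 * (δ * (2 ^ j : ℕ)) := by push_cast; ring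
        have hj : 1 ≤ δ * ((2 ^ j : ℕ) : ℝ) := by rw [e] at h; linarith
        have hF := hpos _ hj
        have hF2 := hpos (2 * (δ * ((2 ^ j : ℕ) : ℝ))) (by linarith)
        have hDj := hD _ hj
        rw [max_eq_left hj] at ih
        rw [e, max_eq_left (by linarith), pow_succ', le_div_iff₀ hF2]
        rw [le_div_iff₀ hF] at ih
        have h2 := hdouble (2 ^ j) hj Nat.one_le_two_pow
        have hun := hu0 (2 * 2 ^ j)
        rcases h2 with h2 | h2
        · rw [le_div_iff₀ hF] at h2
          calc _ ≤ u (2 * 2 ^ j) * (D * F (δ * (2 ^ j : ℕ))) := mul_le_mul_of_nonneg_left hDj hun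
            _ = D * (u (2 * 2 ^ j) * F (δ * (2 ^ j : ℕ))) := by ring
            _ ≤ D * 2 := mul_le_mul_of_nonneg_left h2 (by linarith)
            _ ≤ B := by rw [mul_comm]; exact le_max_left _ _
        · rw [le_div_iff₀ (by linarith)] at h2
          calc _ ≤ u (2 * 2 ^ j) * (D * F (δ * (2 ^ j : ℕ))) := mul_le_mul_of_nonneg_left hDj hun
            _ = u (2 * 2 ^ j) * D * F (δ * (2 ^ j : ℕ)) := by ring
            _ ≤ u (2 ^ j) * F (δ * (2 ^ j : ℕ)) := mul_le_mul_of_nonneg_right h2 hF.le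
            _ ≤ B := ih
  refine ⟨B, δ / 2, hB0, by linarith, fun n hn => ?_⟩
  have h1 : 2 ^ Nat.log 2 n ≤ n := Nat.pow_log_le_self 2 (by omega)
  have h2 : n < 2 ^ (Nat.log 2 n + 1) := Nat.lt_pow_succ_log_self (by norm_num) n
  refine (hA h1).trans ((hdy _).trans ?_)
  refine div_le_div_of_nonneg_left hB0.le (hpos _ (le_max_right _ _)) ?_
  refine hmono (Set.mem_Ici.2 (le_max_right _ _)) (Set.mem_Ici.2 (le_max_right _ _))
    (max_le_max ?_ le_rfl)
  have h3 : (n : ℝ) ≤ 2 * (2 ^ Nat.log 2 n : ℕ) := by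
    rw [pow_succ'] at h2; exact_mod_cast h2.le
  nlinarith

end Decay

/-! ### Word length and group norms -/

section WordLength

variable {G : Type*} [Group G]

lemma exists_word {S : Set G} (hS : ∀ s ∈ S, s⁻¹ ∈ S) {g : G} (hg : g ∈ Subgroup.closure S) :
    ∃ l : List G, l.length = wordLength S g ∧ (∀ x ∈ l, x ∈ S) ∧ l.prod = g := by
  have hne : { n : ℕ | ∃ l : List G, l.length = n ∧ (∀ x ∈ l, x ∈ S) ∧ l.prod = g }.Nonempty := by
    rw [← Subgroup.mem_toSubmonoid, Subgroup.closure_toSubmonoid] at hg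
    obtain ⟨l, hl, hp⟩ := Submonoid.exists_list_of_mem_closure hg
    refine ⟨l.length, l, rfl, fun x hx => ?_, hp⟩
    rcases hl x hx with h | h
    · exact h
    · simpa using hS _ (Set.mem_inv.1 h)
  exact Nat.sInf_mem hne

lemma wordLength_le_of_list {S : Set G} {l : List G} (hl : ∀ x ∈ l, x ∈ S) :
    wordLength S l.prod ≤ l.length :=
  Nat.sInf_le ⟨l, rfl, hl, rfl⟩

lemma wordLength_mul_le {S : Set G} (hS : ∀ s ∈ S, s⁻¹ ∈ S) {g h : G}
    (hg : g ∈ Subgroup.closure S) (hh : h ∈ Subgroup.closure S) :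
    wordLength S (g * h) ≤ wordLength S g + wordLength S h := by
  obtain ⟨l, hl, hlS, rfl⟩ := exists_word hS hg
  obtain ⟨m, hm, hmS, rfl⟩ := exists_word hS hh
  rw [← List.prod_append, ← hl, ← hm, ← List.length_append]
  refine wordLength_le_of_list fun x hx => ?_
  rcases List.mem_append.1 hx with h | h
  · exact hlS x h
  · exact hmS x h

lemma IsGroupNorm.list_prod_le {N : G → ℝ} (hN : IsGroupNorm N) {m : ℝ} (l : List G)
    (hl : ∀ x ∈ l, N x ≤ m) : N l.prod ≤ l.length * m := by
  induction l with
  | nil => simp [hN.2.1]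
  | cons a l ih =>
    have h1 := ih fun x hx => hl x (List.mem_cons_of_mem _ hx)
    have h2 := hl a List.mem_cons_self
    have h3 := hN.2.2.2 a l.prod
    rw [List.prod_cons, List.length_cons]
    push_cast
    linarith

/-- Cutting a word into blocks of length `s`: a bound on `N` over the ball of radius `s`
propagates linearly to longer words. -/
lemma IsGroupNorm.chain_le {N : G → ℝ} (hN : IsGroupNorm N) {S : Set G} {s : ℕ} {m : ℝ}
    (hball : ∀ g ∈ Subgroup.closure S, wordLength S g ≤ s → N g ≤ m) :
    ∀ n : ℕ, ∀ l : List G, l.length ≤ n * s → (∀ x ∈ l, x ∈ S) → N l.prod ≤ n * m := by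
  have hcl : ∀ l : List G, (∀ x ∈ l, x ∈ S) → l.prod ∈ Subgroup.closure S := fun l hl =>
    Subgroup.list_prod_mem _ fun x hx => Subgroup.subset_closure (hl x hx)
  intro n
  induction n with
  | zero =>
    intro l hl _
    have : l = [] := List.length_eq_zero_iff.1 (by omega)
    simp [this, hN.2.1]
  | succ n ih =>
    intro l hl hlS
    have h1 : ∀ x ∈ l.take s, x ∈ S := fun x hx => hlS x (List.mem_of_mem_take hx)
    have h2 : ∀ x ∈ l.drop s, x ∈ S := fun x hx => hlS x (List.mem_of_mem_drop hx)
    have h3 := ih (l.drop s) (by rw [List.length_drop]; rw [Nat.succ_mul] at hl; omega) h2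
    have h4 := hball _ (hcl _ h1)
      ((wordLength_le_of_list h1).trans (by rw [List.length_take]; omega))
    have h5 := hN.2.2.2 (l.take s).prod (l.drop s).prod
    rw [List.prod_take_mul_prod_drop] at h5
    push_cast
    linarith

end WordLength

/-! ### Averaging over balls and summing over scales -/

section Averaging

variable {G : Type*} [Group G]

/-- Squaring `N h ≤ N (h * g) + N g` and averaging over `g ∈ B`; for `B` a ball and `h` in `B`, the
ball of twice the radius serves as `B'`. -/
lemma IsGroupNorm.ball_average {N : G → ℝ} (hN : IsGroupNorm N) {B B' : Finset G} {h : G}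
    (hB : B ⊆ B') (hBB' : ∀ g ∈ B, h * g ∈ B') :
    (B.card : ℝ) * N h ^ 2 ≤ 4 * ∑ g ∈ B', N g ^ 2 := by
  have h1 : ∀ g ∈ B, N h ^ 2 ≤ 2 * N (h * g) ^ 2 + 2 * N g ^ 2 := by
    intro g _
    have h2 := hN.2.2.2 (h * g) g⁻¹
    rw [mul_inv_cancel_right, hN.2.2.1] at h2
    have h3 := hN.1 h
    nlinarith [sq_nonneg (N (h * g) - N g), hN.1 (h * g), hN.1 g]
  have h2 := Finset.sum_le_sum h1
  rw [Finset.sum_const, nsmul_eq_mul, Finset.sum_add_distrib, ← Finset.mul_sum,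
    ← Finset.mul_sum] at h2
  have h3 : ∑ g ∈ B, N g ^ 2 ≤ ∑ g ∈ B', N g ^ 2 :=
    Finset.sum_le_sum_of_subset_of_nonneg hB fun _ _ _ => sq_nonneg _
  have h4 : ∑ g ∈ B, N (h * g) ^ 2 ≤ ∑ g ∈ B', N g ^ 2 := by
    rw [← Finset.sum_image (s := B) (g := fun g => h * g) (f := fun g => N g ^ 2)
      (fun _ _ _ _ e => mul_left_cancel e)]
    exact Finset.sum_le_sum_of_subset_of_nonneg (Finset.image_subset_iff.2 hBB')
      fun _ _ _ => sq_nonneg _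
  linarith

/-- If the weights `w` decay geometrically beyond the first scale whose ball contains `g`, and at
that scale are controlled by `ν g`, then the sum over all scales is controlled by `ν`. -/
lemma scale_sum_le {G : Type*} {B : ℕ → Finset G} {w : ℕ → ℝ} (hw : ∀ j, 0 ≤ w j) {ν M : G → ℝ}
    (hM : ∀ g, 0 ≤ M g) (hν : ∀ g, 0 ≤ ν g) {θ C : ℝ} (hθ0 : 0 ≤ θ) (hθ1 : θ < 1) (hC : 0 ≤ C)
    (hgeo : ∀ l m, ∀ g ∈ B l, w (l + m) ≤ C * θ ^ m * ν g)
    (hsum : Summable fun g => ν g * M g) (n : ℕ) :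
    ∑ j ∈ Finset.range n, w j * ∑ g ∈ B j, M g ≤ C * (1 - θ)⁻¹ * ∑' g, ν g * M g := by
  set T := (Finset.range n).biUnion B
  have hpt : ∀ g, ∑ j ∈ Finset.range n, (if g ∈ B j then w j else 0) ≤ C * (1 - θ)⁻¹ * ν g := by
    intro g
    have hR : 0 ≤ C * (1 - θ)⁻¹ * ν g :=
      mul_nonneg (mul_nonneg hC (inv_nonneg.2 (by linarith))) (hν g)
    by_cases hex : ∃ j, g ∈ B j
    · set l := Nat.find hex with hl
      have hlB : g ∈ B l := Nat.find_spec hex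
      have h1 : ∑ j ∈ Finset.range n, (if g ∈ B j then w j else 0) ≤
          ∑ j ∈ Finset.range (l + n), (if l ≤ j then w j else 0) := by
        refine (Finset.sum_le_sum fun j _ => ?_).trans
          (Finset.sum_le_sum_of_subset_of_nonneg (Finset.range_mono (Nat.le_add_left n l))
            fun j _ _ => ?_)
        · by_cases hj : g ∈ B j
          · rw [if_pos hj, if_pos (Nat.find_min' hex hj)]
          · rw [if_neg hj]; split_ifs; exacts [hw j, le_rfl]
        · split_ifs; exacts [hw j, le_rfl]
      refine h1.trans ?_
      rw [Finset.sum_range_add, Finset.sum_eq_zero, zero_add]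
      · calc ∑ m ∈ Finset.range n, (if l ≤ l + m then w (l + m) else 0)
            ≤ ∑ m ∈ Finset.range n, C * ν g * θ ^ m := Finset.sum_le_sum fun m _ => by
              rw [if_pos (Nat.le_add_right l m)]
              exact (hgeo l m g hlB).trans (le_of_eq (by ring))
          _ = C * ν g * ∑ m ∈ Finset.range n, θ ^ m := by rw [Finset.mul_sum]
          _ ≤ C * ν g * (1 - θ)⁻¹ := by
              refine mul_le_mul_of_nonneg_left ?_ (mul_nonneg hC (hν g))
              rw [← tsum_geometric_of_lt_one hθ0 hθ1]
              exact (summable_geometric_of_lt_one hθ0 hθ1).sum_le_tsum _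
                fun _ _ => pow_nonneg hθ0 _
          _ = _ := by ring
      · intro j hj
        rw [if_neg (by have := Finset.mem_range.1 hj; omega)]
    · push Not at hex
      simpa [hex] using hR
  calc ∑ j ∈ Finset.range n, w j * ∑ g ∈ B j, M g
      = ∑ j ∈ Finset.range n, ∑ g ∈ T, (if g ∈ B j then w j else 0) * M g := by
        refine Finset.sum_congr rfl fun j hj => ?_
        rw [Finset.mul_sum]
        simp only [ite_mul, zero_mul]
        rw [← Finset.sum_filter, Finset.filter_mem_eq_inter,
          Finset.inter_eq_right.2 (Finset.subset_biUnion_of_mem B hj)]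
    _ = ∑ g ∈ T, (∑ j ∈ Finset.range n, (if g ∈ B j then w j else 0)) * M g := by
        rw [Finset.sum_comm]
        exact Finset.sum_congr rfl fun g _ => by rw [Finset.sum_mul]
    _ ≤ ∑ g ∈ T, C * (1 - θ)⁻¹ * (ν g * M g) := Finset.sum_le_sum fun g _ => by
        rw [← mul_assoc]
        exact mul_le_mul_of_nonneg_right (hpt g) (hM g)
    _ = C * (1 - θ)⁻¹ * ∑ g ∈ T, ν g * M g := by rw [Finset.mul_sum]
    _ ≤ _ := by
        refine mul_le_mul_of_nonneg_left ?_ (mul_nonneg hC (inv_nonneg.2 (by linarith)))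
        exact hsum.sum_le_tsum _ fun g _ => mul_nonneg (hν g) (hM g)

end Averaging

/-! ### Pseudo-Poincaré inequalities -/

section PseudoPoincare

variable {G : Type*} [Group G]

/-- A power function bounded below by `1`, up to a constant, has nonnegative exponent. -/
lemma growth_exponent_nonneg {c : ℝ → ℝ} {C d : ℝ} (h1 : ∀ r, 1 ≤ r → 1 ≤ c r)
    (h2 : ∀ r, 1 ≤ r → c r ≤ C * r ^ d) : 0 ≤ d := by
  by_contra! hd
  have ht : Filter.Tendsto (fun r : ℝ => C * r ^ (-(-d))) Filter.atTop (nhds (C * 0)) :=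
    (tendsto_rpow_neg_atTop (by linarith : 0 < -d)).const_mul C
  rw [mul_zero, neg_neg] at ht
  obtain ⟨r, hr1, hr2⟩ :=
    ((ht.eventually_lt_const one_pos).and (Filter.eventually_ge_atTop 1)).exists
  linarith [h1 r hr2, h2 r hr2]

/-- The pseudo-Poincaré inequality for one long-range component `ν`: every group norm is
controlled by `PhiOf φ` of the word length times its `ν`-energy, uniformly in the norm.

With `n = |h|`, chaining through balls of radius `2 ^ j ≤ n` gives
`N h ^ 2 ≤ C (n / 2 ^ j) ^ 2 · (average of N ^ 2 over the ball of radius 2 ^ (j + 1))`. Multiplying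
by `4 ^ j / φ (2 ^ j)` and summing over `j`, the left-hand coefficients add up to the integral of
`2 s / φ s` over `[0, n]`, up to a constant, and the right-hand sides add up to at most
`C n ^ 2` times the `ν`-energy. -/
lemma pseudo_poincare {H : Subgroup G} {S : Finset G} {φ : ℝ → ℝ} {d γ : ℝ} {ν : G → ℝ}
    (hS : ∀ s ∈ S, s⁻¹ ∈ S) (hgen : Subgroup.closure (S : Set G) = H) {c₁ C₁ : ℝ} (hc₁ : 0 < c₁)
    (hgrowth : ∀ r : ℝ, 1 ≤ r →
      c₁ * r ^ d ≤ (({h : G | h ∈ H ∧ (wordLength (S : Set G) h : ℝ) ≤ r}).ncard : ℝ) ∧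
      (({h : G | h ∈ H ∧ (wordLength (S : Set G) h : ℝ) ≤ r}).ncard : ℝ) ≤ C₁ * r ^ d)
    (hφpos : ∀ t : ℝ, 0 ≤ t → 0 < φ t) (hφmono : MonotoneOn φ (Set.Ici 0))
    (hγ : 0 < γ) (hφreg : RegVaryAt φ γ) (hν : ∀ g, 0 ≤ ν g) {c₂ : ℝ} (hc₂ : 0 < c₂)
    (hcomp : ∀ h ∈ H, c₂ ≤ ν h * φ (1 + (wordLength (S : Set G) h : ℝ)) *
        (1 + (wordLength (S : Set G) h : ℝ)) ^ d) :
    ∃ C : ℝ, 0 < C ∧ ∀ N : G → ℝ, IsGroupNorm N → Summable (fun g => ν g * N g ^ 2) →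
      ∀ h ∈ H, N h ^ 2 ≤ C * PhiOf φ (wordLength (S : Set G) h) * ∑' g, ν g * N g ^ 2 := by
  have hS' : ∀ s ∈ (S : Set G), s⁻¹ ∈ (S : Set G) := fun s hs => hS s hs
  have hfin : ∀ n : ℕ, 1 ≤ n → {h : G | h ∈ H ∧ wordLength (S : Set G) h ≤ n}.Finite := by
    intro n hn
    have h1 := (hgrowth n (by exact_mod_cast hn)).1
    have h2 : 0 < c₁ * (n : ℝ) ^ d := by positivity
    have h3 := h2.trans_le h1
    have h4 := Set.finite_of_ncard_pos (by exact_mod_cast h3)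
    simpa using h4
  -- `ball j` is the ball of radius `2 ^ j` in `H`
  choose ball hball using fun j : ℕ =>
    show ∃ B : Finset G, ∀ g, g ∈ B ↔ g ∈ H ∧ wordLength (S : Set G) g ≤ 2 ^ j from
      ⟨(hfin (2 ^ j) Nat.one_le_two_pow).toFinset, fun g => by simp⟩
  have hcard : ∀ j : ℕ, c₁ * ((2 : ℝ) ^ j) ^ d ≤ (ball j).card := by
    intro j
    have h1 := (hgrowth (2 ^ j) (one_le_pow₀ one_le_two)).1
    have e : {h : G | h ∈ H ∧ (wordLength (S : Set G) h : ℝ) ≤ 2 ^ j} = (ball j : Set G) := by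
      ext g
      have : ((wordLength (S : Set G) g : ℝ) ≤ 2 ^ j) ↔ wordLength (S : Set G) g ≤ 2 ^ j := by
        exact_mod_cast Iff.rfl
      simp [hball, this]
    rwa [e, Set.ncard_coe_finset] at h1
  have hballmono : ∀ i j : ℕ, i ≤ j → ball i ⊆ ball j := by
    intro i j hij g hg
    rw [hball] at hg ⊢
    exact ⟨hg.1, hg.2.trans (Nat.pow_le_pow_right (by norm_num) hij)⟩
  have hd : 0 ≤ d := by
    refine growth_exponent_nonneg (c := fun r =>
      (({h : G | h ∈ H ∧ (wordLength (S : Set G) h : ℝ) ≤ r}).ncard : ℝ)) (C := C₁)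
      (fun r hr => ?_) (fun r hr => (hgrowth r hr).2)
    have h1 := (hgrowth r hr).1
    have h2 : 0 < c₁ * r ^ d := by positivity
    exact_mod_cast Nat.one_le_iff_ne_zero.2
      (Nat.pos_iff_ne_zero.1 (by exact_mod_cast h2.trans_le h1))
  have hIci : Set.Ici (1 : ℝ) ⊆ Set.Ici 0 := Set.Ici_subset_Ici.2 zero_le_one
  have hφpos1 : ∀ t : ℝ, 1 ≤ t → 0 < φ t := fun t ht => hφpos t (by linarith)
  obtain ⟨D, hD1, hD⟩ := exists_doubling (hφmono.mono hIci) hφpos1 hφreg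
  obtain ⟨q, K, hq, hK, hqK⟩ := exists_dyadic_growth hγ (hφmono.mono hIci) hφpos1 hφreg
  have hq0 : 0 < q := by linarith
  have hpow1 : ∀ j : ℕ, (1 : ℝ) ≤ 2 ^ j := fun j => one_le_pow₀ one_le_two
  have hφ2 : ∀ j : ℕ, 0 < φ (2 ^ j) := fun j => hφpos1 _ (hpow1 j)
  have hb : ∀ j : ℕ, (0 : ℝ) < ((2 : ℝ) ^ j) ^ d := fun j => by positivity
  have hV : ∀ j : ℕ, (0 : ℝ) < (ball j).card := fun j => (mul_pos hc₁ (hb j)).trans_le (hcard j)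
  -- weight of the scale `2 ^ j`, at most a constant times `ν` at distance about `2 ^ j`
  set w : ℕ → ℝ := fun j => 1 / (φ (2 ^ j) * (ball j).card) with hw
  have hw0 : ∀ j, 0 ≤ w j := fun j => (one_div_pos.2 (mul_pos (hφ2 j) (hV j))).le
  set C' : ℝ := K * D ^ 2 * 4 ^ d / (c₁ * c₂) with hC'
  have hC'0 : 0 < C' := by positivity
  have hgeo : ∀ l m, ∀ g ∈ ball (l + 1), w (l + m) ≤ C' * q⁻¹ ^ m * ν g := by
    intro l m g hg
    rw [hball] at hg
    set t : ℝ := (wordLength (S : Set G) g : ℝ) with ht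
    have ht0 : 0 ≤ t := Nat.cast_nonneg _
    have htl : 1 + t ≤ 2 * (2 * 2 ^ l) := by
      have h1 : t ≤ 2 ^ (l + 1) := by rw [ht]; exact_mod_cast hg.2
      rw [pow_succ] at h1
      linarith [hpow1 l]
    have h1 : φ (1 + t) ≤ D ^ 2 * φ (2 ^ l) := by
      have h2 : φ (1 + t) ≤ φ (2 * (2 * 2 ^ l)) :=
        hφmono (Set.mem_Ici.2 (by linarith)) (Set.mem_Ici.2 (by positivity)) htl
      have h3 := hD (2 * 2 ^ l) (by linarith [hpow1 l])
      have h4 := mul_le_mul_of_nonneg_left (hD (2 ^ l) (hpow1 l)) (by linarith : 0 ≤ D)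
      calc φ (1 + t) ≤ D * (D * φ (2 ^ l)) := h2.trans (h3.trans h4)
        _ = _ := by ring
    have h2 : (1 + t) ^ d ≤ 4 ^ d * ((2 : ℝ) ^ l) ^ d := by
      rw [← Real.mul_rpow (by norm_num) (by positivity)]
      exact Real.rpow_le_rpow (by linarith) (by linarith) hd
    have h3 : c₂ ≤ ν g * ((D ^ 2 * φ (2 ^ l)) * (4 ^ d * ((2 : ℝ) ^ l) ^ d)) := by
      refine (hcomp g hg.1).trans ?_
      rw [mul_assoc]
      refine mul_le_mul_of_nonneg_left (mul_le_mul h1 h2 (by positivity) ?_) (hν g)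
      exact mul_nonneg (by positivity) (hφ2 l).le
    have h4 : c₁ * ((2 : ℝ) ^ l) ^ d ≤ (ball (l + m)).card :=
      (hcard l).trans (by exact_mod_cast Finset.card_le_card (hballmono _ _ (Nat.le_add_right l m)))
    have h5 := hqK l m
    have hX := hφ2 (l + m)
    have hY := hV (l + m)
    have h6 : (q ^ m * φ (2 ^ l)) * (c₁ * ((2 : ℝ) ^ l) ^ d) ≤
        (K * φ (2 ^ (l + m))) * (ball (l + m)).card :=
      mul_le_mul h5 h4 (by positivity) (by positivity)
    have h7 : 0 ≤ ν g * (D ^ 2 * 4 ^ d) := mul_nonneg (hν g) (by positivity)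
    have h8 := mul_le_mul_of_nonneg_left h6 h7
    have h9 := mul_le_mul_of_nonneg_left h3 (by positivity : 0 ≤ q ^ m * c₁)
    simp only [hw]
    rw [div_le_iff₀ (mul_pos hX hY)]
    have hqm : 0 < q ^ m := by positivity
    have h10 : (q ^ m * c₁) * c₂ ≤
        ν g * (D ^ 2 * 4 ^ d) * ((K * φ (2 ^ (l + m))) * (ball (l + m)).card) := by
      refine h9.trans (le_trans (le_of_eq ?_) h8)
      ring
    rw [hC', inv_pow]
    have e : K * D ^ 2 * 4 ^ d / (c₁ * c₂) * (q ^ m)⁻¹ * ν g *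
        (φ (2 ^ (l + m)) * ((ball (l + m)).card : ℝ)) =
        ν g * (D ^ 2 * 4 ^ d) * ((K * φ (2 ^ (l + m))) * (ball (l + m)).card) /
          ((q ^ m * c₁) * c₂) := by
      field_simp
    rw [e, one_le_div (by positivity)]
    exact h10
  have hθ1 : q⁻¹ < 1 := inv_lt_one_of_one_lt₀ hq
  have hθ0 : 0 ≤ q⁻¹ := inv_nonneg.2 hq0.le
  have hφ0 := hφpos 0 le_rfl
  have hφ1 := hφpos 1 zero_le_one
  -- the term `2 φ(1) / φ(0)` of `L` pays for the integral over `[0, 1]`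
  set L : ℝ := 2 * φ 1 / φ 0 + 4 with hL
  have hL0 : 0 < L := by positivity
  set C'' : ℝ := C' * (1 - q⁻¹)⁻¹ with hC''
  have hC''0 : 0 < C'' := mul_pos hC'0 (inv_pos.2 (by linarith))
  refine ⟨16 * L * C'', by positivity, fun N hN hsum h hh => ?_⟩
  set E := ∑' g, ν g * N g ^ 2 with hE
  have hE0 : 0 ≤ E := tsum_nonneg fun g => mul_nonneg (hν g) (sq_nonneg _)
  obtain ⟨l, hll, hlS, hlp⟩ := exists_word hS' (hgen ▸ hh)
  set n := wordLength (S : Set G) h with hn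
  rcases Nat.eq_zero_or_pos n with h0 | hnpos
  · rw [h0] at hll ⊢
    have : l = [] := List.length_eq_zero_iff.1 hll
    rw [← hlp, this]
    simp [hN.2.1, PhiOf]
  have hn1 : (1 : ℝ) ≤ n := by exact_mod_cast hnpos
  set J := Nat.log 2 n with hJ
  have hJ1 : 2 ^ J ≤ n := Nat.pow_log_le_self 2 (by omega)
  have hJ2 : n < 2 ^ (J + 1) := Nat.lt_pow_succ_log_self (by norm_num) n
  have hterm : ∀ j ∈ Finset.range (J + 1), 4 ^ j / φ (2 ^ j) * N h ^ 2 ≤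
      16 * (n : ℝ) ^ 2 * (w j * ∑ g ∈ ball (j + 1), N g ^ 2) := by
    intro j hj
    have hjJ : j ≤ J := by have := Finset.mem_range.1 hj; omega
    have hjn : 2 ^ j ≤ n := (Nat.pow_le_pow_right (by norm_num) hjJ).trans hJ1
    have hjn' : (2 : ℝ) ^ j ≤ n := by exact_mod_cast hjn
    set Tj := ∑ g ∈ ball (j + 1), N g ^ 2 with hT
    have hT0 : 0 ≤ Tj := Finset.sum_nonneg fun _ _ => sq_nonneg _
    set m := Real.sqrt (4 * Tj / (ball j).card) with hm
    have hmsq : m ^ 2 = 4 * Tj / (ball j).card :=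
      Real.sq_sqrt (div_nonneg (by linarith) (hV j).le)
    have hm0 : 0 ≤ m := Real.sqrt_nonneg _
    have hbm : ∀ g ∈ Subgroup.closure (S : Set G), wordLength (S : Set G) g ≤ 2 ^ j → N g ≤ m := by
      intro g hg hgl
      refine Real.le_sqrt_of_sq_le ?_
      rw [le_div_iff₀ (hV j), mul_comm]
      refine hN.ball_average (hballmono _ _ (Nat.le_succ j)) fun g' hg' => ?_
      rw [hball] at hg' ⊢
      refine ⟨H.mul_mem (hgen ▸ hg) hg'.1, ?_⟩
      have := wordLength_mul_le hS' hg (hgen.symm ▸ hg'.1)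
      rw [pow_succ]
      omega
    have hch := hN.chain_le hbm (n / 2 ^ j + 1) l (by
      rw [hll]; exact (Nat.lt_div_mul_add (Nat.two_pow_pos j)).le.trans
        (le_of_eq (by ring))) hlS
    rw [hlp] at hch
    have hpj : (0 : ℝ) < 2 ^ j := by positivity
    have hnum : ((n / 2 ^ j + 1 : ℕ) : ℝ) ≤ 2 * n / 2 ^ j := by
      have h1 : ((n / 2 ^ j : ℕ) : ℝ) ≤ n / 2 ^ j := by
        simpa using (Nat.cast_div_le (α := ℝ) (m := n) (n := 2 ^ j))
      have h2 : 1 ≤ (n : ℝ) / 2 ^ j := (one_le_div hpj).2 hjn'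
      push_cast
      rw [mul_div_assoc]; linarith
    have h1 : N h ≤ 2 * n / 2 ^ j * m := hch.trans (mul_le_mul_of_nonneg_right hnum hm0)
    have h2 : N h ^ 2 ≤ (2 * n / 2 ^ j * m) ^ 2 := pow_le_pow_left₀ (hN.1 h) h1 2
    have h3 : 0 ≤ (4 : ℝ) ^ j / φ (2 ^ j) := div_nonneg (by positivity) (hφ2 j).le
    refine (mul_le_mul_of_nonneg_left h2 h3).trans (le_of_eq ?_)
    rw [mul_pow, hmsq]
    have e : (4 : ℝ) ^ j = 2 ^ j * 2 ^ j := by rw [← mul_pow]; norm_num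
    rw [e]
    have := (hφ2 j).ne'
    have := (hV j).ne'
    simp only [hw]
    field_simp
    ring
  have hsc := scale_sum_le (B := fun j => ball (j + 1)) hw0 (fun g => sq_nonneg (N g)) hν hθ0 hθ1
    hC'0.le hgeo hsum (J + 1)
  set Sg := ∑ j ∈ Finset.range (J + 1), (4 : ℝ) ^ j / φ (2 ^ j) with hSg
  have h1 : Sg * N h ^ 2 ≤ 16 * (n : ℝ) ^ 2 * (C'' * E) := by
    have h2 := Finset.sum_le_sum hterm
    rw [← Finset.sum_mul, ← Finset.mul_sum] at h2
    exact h2.trans (mul_le_mul_of_nonneg_left hsc (by positivity))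
  have hSg1 : 1 / φ 1 ≤ Sg := by
    have := Finset.single_le_sum (f := fun j : ℕ => (4 : ℝ) ^ j / φ (2 ^ j))
      (fun j _ => div_nonneg (by positivity) (hφ2 j).le)
      (Finset.mem_range.2 (Nat.succ_pos J))
    simpa using this
  set I := ∫ s in (0 : ℝ)..n, 2 * s / φ s with hI
  have hIpos : 0 < I := integral_weight_pos hφpos hφmono (by linarith)
  have hIle : I ≤ L * Sg := by
    have h2 : I ≤ ∫ s in (0 : ℝ)..(2 ^ (J + 1)), 2 * s / φ s := by
      have hnJ : (n : ℝ) ≤ 2 ^ (J + 1) := by exact_mod_cast hJ2.le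
      rw [← intervalIntegral.integral_add_adjacent_intervals
        (intervalIntegrable_weight hφpos hφmono le_rfl (by linarith : (0 : ℝ) ≤ n))
        (intervalIntegrable_weight hφpos hφmono (by linarith) (by positivity))]
      refine le_add_of_nonneg_right (intervalIntegral.integral_nonneg hnJ fun x hx => ?_)
      have hx0 : 0 ≤ x := by linarith [hx.1]
      exact div_nonneg (by linarith) (hφpos x hx0).le
    refine h2.trans ((integral_weight_le hφpos hφmono (J + 1)).trans ?_)
    rw [← Finset.mul_sum, hL, add_mul]
    refine add_le_add ?_ le_rfl
    calc 2 / φ 0 = 2 * φ 1 / φ 0 * (1 / φ 1) := by field_simp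
      _ ≤ _ := mul_le_mul_of_nonneg_left hSg1 (by positivity)
  have hPhi : PhiOf φ n = (n : ℝ) ^ 2 / I := if_pos hn1
  rw [hPhi]
  have h3 : N h ^ 2 * I ≤ L * (16 * (n : ℝ) ^ 2 * (C'' * E)) :=
    calc N h ^ 2 * I ≤ N h ^ 2 * (L * Sg) := mul_le_mul_of_nonneg_left hIle (sq_nonneg _)
      _ = L * (Sg * N h ^ 2) := by ring
      _ ≤ _ := mul_le_mul_of_nonneg_left h1 hL0.le
  calc N h ^ 2 ≤ L * (16 * (n : ℝ) ^ 2 * (C'' * E)) / I := (le_div_iff₀ hIpos).2 h3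
    _ = _ := by ring

/-- The pseudo-Poincaré inequality for the nearest-neighbour part of the measure. -/
lemma pseudo_poincare_generators {ν : G → ℝ} (hν : ∀ g, 0 ≤ ν g) (hsymm : ∀ g, ν g⁻¹ = ν g)
    {ε : ℝ} (hε : 0 < ε) (hgen : Subgroup.closure {g : G | ε < ν g} = ⊤) {N : G → ℝ}
    (hN : IsGroupNorm N) (hsum : Summable (fun g => ν g * N g ^ 2)) (h : G) :
    N h ^ 2 ≤ ε⁻¹ * (wordLength {g : G | ε < ν g} h : ℝ) ^ 2 * ∑' g, ν g * N g ^ 2 := by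
  set E := ∑' g, ν g * N g ^ 2 with hE
  obtain ⟨l, hll, hlS, rfl⟩ := exists_word (S := {g : G | ε < ν g})
    (fun s hs => by simpa [hsymm] using hs) (hgen ▸ Subgroup.mem_top h)
  have h1 : ∀ g ∈ l, N g ≤ Real.sqrt (E / ε) := by
    intro g hg
    refine Real.le_sqrt_of_sq_le ((le_div_iff₀ hε).2 ?_)
    have h2 : ν g * N g ^ 2 ≤ E :=
      hsum.le_tsum g fun g' _ => mul_nonneg (hν g') (sq_nonneg _)
    have h3 : ε * N g ^ 2 ≤ ν g * N g ^ 2 :=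
      mul_le_mul_of_nonneg_right (le_of_lt (hlS g hg)) (sq_nonneg _)
    linarith
  have h2 := hN.list_prod_le l h1
  have hE0 : 0 ≤ E := tsum_nonneg fun g => mul_nonneg (hν g) (sq_nonneg _)
  refine (pow_le_pow_left₀ (hN.1 _) h2 2).trans (le_of_eq ?_)
  rw [mul_pow, Real.sq_sqrt (by positivity), hll]
  ring

end PseudoPoincare

/-! ### Translations and the Markov operator on `ℓ²(G)` -/

section HilbertSpace

/-- The real Hilbert space `ℓ²(G)`. -/
abbrev EllTwo (G : Type*) := lp (fun _ : G => ℝ) 2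

lemma memlp_two_iff {G : Type*} {f : G → ℝ} : Memℓp f 2 ↔ Summable fun x => f x ^ 2 := by
  rw [memℓp_gen_iff (by norm_num)]
  simp

lemma hasSum_inner_mul {G : Type*} (f g : EllTwo G) : HasSum (fun x => f x * g x) (inner ℝ f g) := by
  simpa [mul_comm] using lp.hasSum_inner (𝕜 := ℝ) f g

lemma hasSum_norm_sq {G : Type*} (f : EllTwo G) : HasSum (fun x => f x ^ 2) (‖f‖ ^ 2) := by
  rw [← real_inner_self_eq_norm_sq]
  simpa [pow_two] using hasSum_inner_mul f f

variable {G : Type*} [Group G]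

/-- Right translation `f ↦ (x ↦ f (x * h))` on `ℓ²(G)`. -/
def rtrans (h : G) (f : EllTwo G) : EllTwo G :=
  ⟨fun x => f (x * h), memlp_two_iff.2
    ((Equiv.mulRight h).summable_iff.2 (hasSum_norm_sq f).summable)⟩

@[simp] lemma rtrans_apply (h : G) (f : EllTwo G) (x : G) : rtrans h f x = f (x * h) := rfl

lemma rtrans_one (f : EllTwo G) : rtrans 1 f = f := by ext x; simp

lemma rtrans_mul (g h : G) (f : EllTwo G) : rtrans (g * h) f = rtrans g (rtrans h f) := by
  ext x; simp [mul_assoc]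

lemma rtrans_sub (h : G) (f g : EllTwo G) : rtrans h (f - g) = rtrans h f - rtrans h g := by
  ext x; simp

lemma inner_rtrans (h : G) (f g : EllTwo G) :
    inner ℝ (rtrans h f) (rtrans h g) = (inner ℝ f g : ℝ) :=
  (hasSum_inner_mul (rtrans h f) (rtrans h g)).unique
    ((Equiv.mulRight h).hasSum_iff.2 (hasSum_inner_mul f g))

lemma norm_rtrans (h : G) (f : EllTwo G) : ‖rtrans h f‖ = ‖f‖ := by
  rw [norm_eq_sqrt_real_inner, inner_rtrans, ← norm_eq_sqrt_real_inner]

lemma inner_rtrans_left (h : G) (f g : EllTwo G) :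
    inner ℝ (rtrans h f) g = (inner ℝ f (rtrans h⁻¹ g) : ℝ) := by
  rw [← inner_rtrans h f, ← rtrans_mul, mul_inv_cancel, rtrans_one]

lemma norm_rtrans_sub_sq (h : G) (f : EllTwo G) :
    ‖rtrans h f - f‖ ^ 2 = 2 * (‖f‖ ^ 2 - inner ℝ f (rtrans h f)) := by
  rw [norm_sub_sq_real, norm_rtrans, real_inner_comm]; ring

/-- The displacement `h ↦ ‖f(· h) - f‖₂` is a norm on the group. -/
lemma isGroupNorm_displacement (f : EllTwo G) : IsGroupNorm fun h => ‖rtrans h f - f‖ := by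
  refine ⟨fun _ => norm_nonneg _, by simp [rtrans_one], fun g => ?_, fun g h => ?_⟩
  · change ‖rtrans g⁻¹ f - f‖ = ‖rtrans g f - f‖
    rw [← norm_rtrans g (rtrans g⁻¹ f - f), rtrans_sub, ← rtrans_mul, mul_inv_cancel, rtrans_one,
      norm_sub_rev]
  · change ‖rtrans (g * h) f - f‖ ≤ ‖rtrans g f - f‖ + ‖rtrans h f - f‖
    rw [← norm_rtrans g (rtrans h f - f), rtrans_sub, ← rtrans_mul, add_comm]
    exact norm_sub_le_norm_sub_add_norm_sub _ _ _

/-- The Markov operator `f ↦ ∑ μ(y) f(· y)` on `ℓ²(G)`. -/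
def markov (μ : G → ℝ) (f : EllTwo G) : EllTwo G := ∑' y, μ y • rtrans y f

variable {μ : G → ℝ}

lemma hasSum_markov (hμ : IsSymmProb μ) (f : EllTwo G) :
    HasSum (fun y => μ y • rtrans y f) (markov μ f) := by
  refine (Summable.of_norm ?_).hasSum
  refine (hμ.2.1.mul_right ‖f‖).congr fun y => ?_
  rw [norm_smul, norm_rtrans, Real.norm_of_nonneg (hμ.1 y)]

lemma hasSum_inner_markov (hμ : IsSymmProb μ) (f g : EllTwo G) :
    HasSum (fun y => μ y * inner ℝ g (rtrans y f)) (inner ℝ g (markov μ f)) := by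
  have := (hasSum_markov hμ f).mapL (innerSL ℝ g)
  simpa [inner_smul_right] using this

lemma inner_markov_left (hμ : IsSymmProb μ) (f g : EllTwo G) :
    inner ℝ (markov μ f) g = (inner ℝ f (markov μ g) : ℝ) := by
  rw [real_inner_comm]
  refine (hasSum_inner_markov hμ f g).unique ?_
  have h1 := (Equiv.inv G).hasSum_iff.2 (hasSum_inner_markov hμ g f)
  convert h1 using 2 with y
  simp [hμ.2.2.2, ← inner_rtrans_left, real_inner_comm]

lemma markov_apply (hμ : IsSymmProb μ) (f : EllTwo G) (x : G) :
    markov μ f x = ∑' y, μ y * f (x * y) := by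
  have := (hasSum_markov hμ f).mapL (lp.evalCLM ℝ (fun _ : G => ℝ) 2 x)
  exact this.tsum_eq.symm

/-- The energy `∑ μ(y) ‖f(· y) - f‖²` of `f` is `2 ⟨f, (1 - P) f⟩`, with `P` the Markov
operator. -/
lemma hasSum_energy (hμ : IsSymmProb μ) (f : EllTwo G) :
    HasSum (fun y => μ y * ‖rtrans y f - f‖ ^ 2) (2 * (‖f‖ ^ 2 - inner ℝ f (markov μ f))) := by
  have h1 : HasSum (fun y => μ y * ‖f‖ ^ 2) (1 * ‖f‖ ^ 2) :=
    (hμ.2.2.1 ▸ hμ.2.1.hasSum).mul_right _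
  rw [one_mul] at h1
  have h2 := (h1.sub (hasSum_inner_markov hμ f f)).mul_left 2
  have e : (fun y => μ y * ‖rtrans y f - f‖ ^ 2) =
      fun y => 2 * (μ y * ‖f‖ ^ 2 - μ y * inner ℝ f (rtrans y f)) :=
    funext fun y => by rw [norm_rtrans_sub_sq]; ring
  rw [e]
  exact h2

/-- One step of the Markov operator `P` dissipates at least `μ 1` times the energy, because
`P - μ 1` has operator norm at most `1 - μ 1`. -/
lemma norm_markov_sq_le (hμ : IsSymmProb μ) (f : EllTwo G) :
    ‖markov μ f‖ ^ 2 ≤ ‖f‖ ^ 2 - μ 1 * ∑' y, μ y * ‖rtrans y f - f‖ ^ 2 := by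
  have hs := hasSum_markov hμ f
  have hsplit := hs.summable.tsum_eq_add_tsum_ite 1
  rw [rtrans_one] at hsplit
  have hμsplit := hμ.2.1.tsum_eq_add_tsum_ite 1
  rw [hμ.2.2.1] at hμsplit
  have hsumm : Summable fun y => if y = 1 then 0 else μ y := by
    refine Summable.of_nonneg_of_le (fun y => ?_) (fun y => ?_) hμ.2.1
    · split_ifs; exacts [le_rfl, hμ.1 y]
    · split_ifs; exacts [hμ.1 y, le_rfl]
  have h1 : HasSum (fun y => (if y = 1 then 0 else μ y) * ‖f‖) ((1 - μ 1) * ‖f‖) := by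
    have : 1 - μ 1 = ∑' y, if y = 1 then 0 else μ y := by linarith
    rw [this]; exact hsumm.hasSum.mul_right _
  have h2 : ‖markov μ f - μ 1 • f‖ ≤ (1 - μ 1) * ‖f‖ := by
    have e : markov μ f - μ 1 • f = ∑' y, if y = 1 then 0 else μ y • rtrans y f := by
      rw [sub_eq_iff_eq_add, add_comm]; exact hsplit
    rw [e]
    refine tsum_of_norm_bounded h1 fun y => ?_
    split_ifs
    · simp
    · rw [norm_smul, norm_rtrans, Real.norm_of_nonneg (hμ.1 y)]
  have h3 := pow_le_pow_left₀ (norm_nonneg _) h2 2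
  rw [norm_sub_sq_real, inner_smul_right, norm_smul, Real.norm_of_nonneg (hμ.1 1),
    real_inner_comm] at h3
  rw [(hasSum_energy hμ f).tsum_eq]
  nlinarith

/-- The double sum defining the Dirichlet form, summed first over the base point. -/
lemma dirichletForm_eq (hμ : IsSymmProb μ) (f : EllTwo G) :
    dirichletForm μ f = (1 / 2) * ∑' y, μ y * ‖rtrans y f - f‖ ^ 2 := by
  have h1 : ∀ y, HasSum (fun x => (f (x * y) - f x) ^ 2 * μ y) (μ y * ‖rtrans y f - f‖ ^ 2) := by
    intro y
    rw [mul_comm (μ y)]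
    exact (hasSum_norm_sq (rtrans y f - f)).mul_right (μ y)
  set F : G × G → ℝ := fun q => (f (q.2 * q.1) - f q.2) ^ 2 * μ q.1 with hF
  have hsum : Summable F := by
    refine (summable_prod_of_nonneg fun q => mul_nonneg (sq_nonneg _) (hμ.1 _)).2
      ⟨fun y => (h1 y).summable, ?_⟩
    refine (hasSum_energy hμ f).summable.congr fun y => ?_
    exact (h1 y).tsum_eq.symm
  rw [dirichletForm]
  congr 1
  rw [← (Equiv.prodComm G G).tsum_eq]
  refine (hsum.tsum_prod).trans ?_
  exact tsum_congr fun y => (h1 y).tsum_eq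

/-- Averaging over a finite set `A` of translations that move `f` little in `ℓ²`: the correlations
`⟨f, f(· h)⟩`, `h ∈ A`, add up to at most `‖f‖₁²`. -/
lemma card_mul_norm_sq_le (f : EllTwo G) {L : ℝ} (hL : HasSum (fun x => |f x|) L) (A : Finset G)
    {b : ℝ} (hb : ∀ h ∈ A, ‖rtrans h f - f‖ ^ 2 ≤ 2 * b) :
    (A.card : ℝ) * ‖f‖ ^ 2 ≤ A.card * b + L ^ 2 := by
  have h1 : ∑ h ∈ A, inner ℝ f (rtrans h f) ≤ L ^ 2 := by
    have h2 : HasSum (fun x => ∑ h ∈ A, f x * f (x * h)) (∑ h ∈ A, inner ℝ f (rtrans h f)) :=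
      hasSum_sum fun h _ => hasSum_inner_mul f (rtrans h f)
    rw [pow_two]
    refine hasSum_le (fun x => ?_) h2 (hL.mul_right L)
    have h3 : ∑ h ∈ A, |f (x * h)| ≤ L :=
      sum_le_hasSum A (fun _ _ => abs_nonneg _) ((Equiv.mulLeft x).hasSum_iff.2 hL)
    calc ∑ h ∈ A, f x * f (x * h) ≤ ∑ h ∈ A, |f x| * |f (x * h)| :=
          Finset.sum_le_sum fun h _ => by rw [← abs_mul]; exact le_abs_self _
      _ = |f x| * ∑ h ∈ A, |f (x * h)| := by rw [Finset.mul_sum]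
      _ ≤ _ := mul_le_mul_of_nonneg_left h3 (abs_nonneg _)
  have h2 : ∑ h ∈ A, (‖f‖ ^ 2 - inner ℝ f (rtrans h f)) ≤ ∑ h ∈ A, b :=
    Finset.sum_le_sum fun h hh => by
      have := hb h hh
      rw [norm_rtrans_sub_sq] at this
      linarith
  rw [Finset.sum_sub_distrib, Finset.sum_const, Finset.sum_const, nsmul_eq_mul, nsmul_eq_mul] at h2
  linarith

end HilbertSpace

/-! ### Convolution powers -/

section ConvolutionPowers

variable {G : Type*} [Group G] {μ : G → ℝ}

/-- The convolution powers as vectors of `ℓ²(G)`: iterates of the Markov operator at `δ₁`. -/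
def convVec (μ : G → ℝ) (n : ℕ) : EllTwo G := (markov μ)^[n] (lp.single 2 1 (1 : ℝ))

lemma convVec_succ (n : ℕ) : convVec μ (n + 1) = markov μ (convVec μ n) :=
  Function.iterate_succ_apply' _ _ _

lemma convPow_succ_eq (hμ : IsSymmProb μ) (n : ℕ) (x : G) :
    convPow μ (n + 1) x = ∑' z, μ z * convPow μ n (x * z) := by
  rw [convPow]
  refine ((Equiv.mulLeft x).tsum_eq _).symm.trans (tsum_congr fun z => ?_)
  simp [hμ.2.2.2, mul_comm]

lemma convVec_apply (hμ : IsSymmProb μ) (n : ℕ) (x : G) : convVec μ n x = convPow μ n x := by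
  induction n generalizing x with
  | zero =>
    by_cases hx : x = 1
    · subst hx; simp [convVec, convPow]
    · simp [convVec, convPow, hx]
  | succ n ih =>
    rw [convVec_succ, markov_apply hμ, convPow_succ_eq hμ]
    simp only [ih]

lemma convPow_nonneg (hμ : IsSymmProb μ) (n : ℕ) (x : G) : 0 ≤ convPow μ n x := by
  induction n generalizing x with
  | zero => simp only [convPow]; split_ifs <;> norm_num
  | succ n ih =>
    rw [convPow_succ_eq hμ]
    exact tsum_nonneg fun z => mul_nonneg (hμ.1 z) (ih _)

lemma hasSum_convPow (hμ : IsSymmProb μ) (n : ℕ) : HasSum (convPow μ n) 1 := by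
  induction n with
  | zero => exact hasSum_ite_eq (1 : G) (1 : ℝ)
  | succ n ih =>
    have h1 : ∀ z, HasSum (fun x => μ z * convPow μ n (x * z)) (μ z) := fun z => by
      simpa using ((Equiv.mulRight z).hasSum_iff.2 ih).mul_left (μ z)
    have hsum : Summable (Function.uncurry fun z x => μ z * convPow μ n (x * z)) := by
      refine (summable_prod_of_nonneg fun q => mul_nonneg (hμ.1 _) (convPow_nonneg hμ _ _)).2
        ⟨fun z => (h1 z).summable, hμ.2.1.congr fun z => (h1 z).tsum_eq.symm⟩
    have h2 : convPow μ (n + 1) = fun x => ∑' z, μ z * convPow μ n (x * z) :=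
      funext (convPow_succ_eq hμ n)
    have h3 : Summable fun x => ∑' z, μ z * convPow μ n (x * z) := hsum.prod_symm.prod
    have h4 := h3.hasSum
    rw [hsum.tsum_comm, tsum_congr fun z => (h1 z).tsum_eq, hμ.2.2.1] at h4
    rwa [h2]

lemma inner_convVec (hμ : IsSymmProb μ) (n m : ℕ) :
    inner ℝ (convVec μ n) (convVec μ m) = convPow μ (n + m) 1 := by
  induction n generalizing m with
  | zero =>
    rw [← convVec_apply hμ, zero_add]
    simp [convVec, lp.inner_single_left]
  | succ n ih =>
    rw [convVec_succ, inner_markov_left hμ, ← convVec_succ, ih, Nat.add_right_comm, add_assoc]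

lemma norm_convVec_sq (hμ : IsSymmProb μ) (n : ℕ) :
    ‖convVec μ n‖ ^ 2 = convPow μ (2 * n) 1 := by
  rw [← real_inner_self_eq_norm_sq, inner_convVec hμ, two_mul]

lemma mul_convPow_le (hμ : IsSymmProb μ) (n : ℕ) :
    μ 1 * convPow μ n 1 ≤ convPow μ (n + 1) 1 := by
  have h := hasSum_inner_markov hμ (convVec μ n) (lp.single 2 1 (1 : ℝ))
  have e : inner ℝ (lp.single 2 1 (1 : ℝ)) (markov μ (convVec μ n)) = convPow μ (n + 1) 1 := by
    rw [lp.inner_single_left, ← convVec_succ, convVec_apply hμ]; simp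
  rw [e] at h
  have h2 := le_hasSum h 1 fun y _ => by
    rw [lp.inner_single_left, rtrans_apply, convVec_apply hμ]
    simpa using mul_nonneg (hμ.1 y) (convPow_nonneg hμ n _)
  rw [lp.inner_single_left, rtrans_apply, convVec_apply hμ] at h2
  simpa using h2

end ConvolutionPowers

/-! ### From a Nash inequality to the spectral profile and return probabilities -/

section Conclusion

variable {G : Type*} [Group G] {μ : G → ℝ}

/-- If `p ν ≤ μ`, then the `ν`-energy is at most `p⁻¹` times the `μ`-energy. Here `M h` plays the
role of the squared displacement `‖f(· h) - f‖²`. -/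
lemma component_energy_le {G : Type*} {μ : G → ℝ} {M : G → ℝ} (hM : ∀ g, 0 ≤ M g)
    (hsum : Summable fun g => μ g * M g)
    {ν : G → ℝ} (hν : ∀ g, 0 ≤ ν g) {p : ℝ} (hp : 0 < p) (hle : ∀ g, p * ν g ≤ μ g) :
    Summable (fun g => ν g * M g) ∧ ∑' g, ν g * M g ≤ p⁻¹ * ∑' g, μ g * M g := by
  have h1 : ∀ g, ν g * M g ≤ p⁻¹ * (μ g * M g) := fun g => by
    rw [← mul_assoc]
    refine mul_le_mul_of_nonneg_right ?_ (hM g)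
    rw [inv_mul_eq_div, le_div_iff₀ hp, mul_comm]
    exact hle g
  have h2 : Summable (fun g => ν g * M g) :=
    Summable.of_nonneg_of_le (fun g => mul_nonneg (hν g) (hM g)) h1 (hsum.mul_left _)
  refine ⟨h2, ?_⟩
  rw [← tsum_mul_left]
  exact h2.tsum_le_tsum h1 (hsum.mul_left _)

/-- A Nash inequality implies a Faber–Krahn inequality: if `f` has support of size at most `v`,
then `‖f‖₁² ≤ v ‖f‖₂²`, so the choice `F r ≥ 2 v` absorbs the `ℓ¹` term. -/
lemma finv_spectral_le (hμ : IsSymmProb μ) {F : ℝ → ℝ} (hFpos : ∀ t : ℝ, 1 ≤ t → 0 < F t)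
    (hFunb : ∀ M : ℝ, ∃ t : ℝ, 1 ≤ t ∧ M ≤ F t) {C : ℝ} (hC : 0 < C)
    (hnash : ∀ (f : EllTwo G) (L : ℝ), HasSum (fun x => |f x|) L → ∀ r : ℝ, 1 ≤ r →
      ‖f‖ ^ 2 ≤ C * r * (∑' y, μ y * ‖rtrans y f - f‖ ^ 2) + L ^ 2 / F r)
    {v : ℝ} (hv : 1 ≤ v) : 1 / (4 * C) / Finv F (2 * v) ≤ spectralProfile μ v := by
  have hne : {t : ℝ | 1 ≤ t ∧ 2 * v ≤ F t}.Nonempty := hFunb (2 * v)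
  have hFinv1 : 1 ≤ Finv F (2 * v) := le_csInf hne fun t ht => ht.1
  refine le_csInf ?_ ?_
  · have hsupp : Function.support (fun x : G => if x = 1 then (1 : ℝ) else 0) = {1} := by
      ext x; simp
    refine ⟨_, fun x => if x = 1 then 1 else 0, ?_, ?_, rfl⟩
    · rw [hsupp, Set.ncard_singleton]
    · rw [hsupp, Set.ncard_singleton]
      simpa using hv
  · rintro ρ ⟨f₀, h1, h2, rfl⟩
    have hfin : (Function.support f₀).Finite := Set.finite_of_ncard_pos (by omega)
    set s := hfin.toFinset with hs
    have hout : ∀ x, x ∉ s → f₀ x = 0 := fun x hx => by simpa [hs] using hx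
    have hsq : Summable fun x => f₀ x ^ 2 :=
      summable_of_ne_finset_zero (s := s) fun x hx => by simp [hout x hx]
    set f : EllTwo G := ⟨f₀, memlp_two_iff.2 hsq⟩ with hf
    have hnorm : ∑' x, f₀ x ^ 2 = ‖f‖ ^ 2 := (hasSum_norm_sq f).tsum_eq
    have hL : HasSum (fun x => |f x|) (∑ x ∈ s, |f₀ x|) :=
      hasSum_sum_of_ne_finset_zero fun x hx => by simp [hf, hout x hx]
    have hL2 : (∑ x ∈ s, |f₀ x|) ^ 2 ≤ v * ‖f‖ ^ 2 := by
      have h3 := sq_sum_le_card_mul_sum_sq (s := s) (f := fun x => |f₀ x|)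
      have h4 : ∑ x ∈ s, |f₀ x| ^ 2 = ‖f‖ ^ 2 := by
        rw [← hnorm, tsum_eq_sum (s := s) fun x hx => by simp [hout x hx]]
        simp
      rw [h4] at h3
      have h5 : (s.card : ℝ) ≤ v := by rwa [hs, ← Set.ncard_eq_toFinset_card _ hfin]
      exact h3.trans (mul_le_mul_of_nonneg_right h5 (sq_nonneg _))
    have hfpos : 0 < ‖f‖ ^ 2 := by
      have hf0 : f ≠ 0 := by
        intro h0
        obtain ⟨x, hx⟩ := Set.nonempty_of_ncard_ne_zero (by omega : (Function.support f₀).ncard ≠ 0)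
        exact hx (congrFun (congrArg Subtype.val h0) x)
      have := norm_pos_iff.2 hf0
      positivity
    set E := ∑' y, μ y * ‖rtrans y f - f‖ ^ 2 with hE
    have hD : dirichletForm μ f₀ = 1 / 2 * E := dirichletForm_eq hμ f
    rw [hnorm, hD]
    have key : ∀ r : ℝ, 1 ≤ r → 2 * v ≤ F r → ‖f‖ ^ 2 ≤ 2 * C * r * E := by
      intro r hr hFr
      have h3 := hnash f _ hL r hr
      have h4 : (∑ x ∈ s, |f₀ x|) ^ 2 / F r ≤ ‖f‖ ^ 2 / 2 := by
        rw [div_le_div_iff₀ (hFpos r hr) two_pos]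
        nlinarith
      linarith
    have hEpos : 0 < E := by
      obtain ⟨r, hr, hFr⟩ := hFunb (2 * v)
      have h3 := hfpos.trans_le (key r hr hFr)
      have h4 : 0 < 2 * C * r := by positivity
      exact (pos_iff_pos_of_mul_pos h3).1 h4
    have h3 : ‖f‖ ^ 2 / (2 * C * E) ≤ Finv F (2 * v) := le_csInf hne fun r hr => by
      rw [div_le_iff₀ (by positivity)]
      exact (key r hr.1 hr.2).trans (le_of_eq (by ring))
    rw [div_le_iff₀ (by positivity)] at h3
    rw [div_div, div_le_div_iff₀ (by positivity) hfpos]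
    nlinarith

/-- A Nash inequality implies return probability decay. It is applied to `μ^{(n)}`, which has
`ℓ¹`-norm one and squared `ℓ²`-norm `μ^{(2n)}(1)`; odd times follow from
`μ(1) μ^{(n)}(1) ≤ μ^{(n+1)}(1)`. -/
lemma return_probability_le (hμ : IsSymmProb μ) (hμ1 : 0 < μ 1) {F : ℝ → ℝ} {γ : ℝ}
    (hFmono : MonotoneOn F (Set.Ici 1)) (hFpos : ∀ t : ℝ, 1 ≤ t → 0 < F t)
    (hFreg : RegVaryAt F γ) {C : ℝ} (hC : 0 < C)
    (hnash : ∀ (f : EllTwo G) (L : ℝ), HasSum (fun x => |f x|) L → ∀ r : ℝ, 1 ≤ r →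
      ‖f‖ ^ 2 ≤ C * r * (∑' y, μ y * ‖rtrans y f - f‖ ^ 2) + L ^ 2 / F r) :
    ∃ c₃ c₄ : ℝ, 0 < c₃ ∧ 0 < c₄ ∧
      ∀ n : ℕ, 1 ≤ n → convPow μ n 1 ≤ c₃ / F (max (c₄ * n) 1) := by
  obtain ⟨D, hD1, hD⟩ := exists_doubling hFmono hFpos hFreg
  set K := max 1 (C / μ 1) with hK
  have hstep : ∀ n, μ 1 * ∑' y, μ y * ‖rtrans y (convVec μ n) - convVec μ n‖ ^ 2 ≤
      ‖convVec μ n‖ ^ 2 - ‖convVec μ (n + 1)‖ ^ 2 := fun n => by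
    rw [convVec_succ]; linarith [norm_markov_sq_le hμ (convVec μ n)]
  have hE0 : ∀ n, 0 ≤ ∑' y, μ y * ‖rtrans y (convVec μ n) - convVec μ n‖ ^ 2 := fun n =>
    tsum_nonneg fun y => mul_nonneg (hμ.1 y) (sq_nonneg _)
  obtain ⟨B, δ, hB, hδ, hdecay⟩ := decay_of_nash (u := fun n => ‖convVec μ n‖ ^ 2) hFmono hFpos hD1
    hD (le_max_left 1 (C / μ 1)) (fun n => sq_nonneg _)
    (by rw [norm_convVec_sq hμ]; simp [convPow])
    (fun n => by
      have := hstep n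
      have := mul_nonneg hμ1.le (hE0 n)
      linarith)
    (fun n r hr => by
      have habs : HasSum (fun x => |convVec μ n x|) 1 := by
        simpa [convVec_apply hμ, abs_of_nonneg (convPow_nonneg hμ n _)] using hasSum_convPow hμ n
      have h1 := hnash (convVec μ n) 1 habs r hr
      rw [one_pow] at h1
      refine h1.trans (add_le_add ?_ le_rfl)
      have h2 := hstep n
      have h3 := hE0 n
      set E := ∑' y, μ y * ‖rtrans y (convVec μ n) - convVec μ n‖ ^ 2
      have hr0 : 0 ≤ r := by linarith
      have h4 : 0 ≤ μ 1 * E := mul_nonneg hμ1.le h3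
      calc C * r * E = C / μ 1 * r * (μ 1 * E) := by field_simp
        _ ≤ K * r * (μ 1 * E) := mul_le_mul_of_nonneg_right
            (mul_le_mul_of_nonneg_right (le_max_right _ _) hr0) h4
        _ ≤ _ := mul_le_mul_of_nonneg_left h2
            (mul_nonneg (zero_le_one.trans (le_max_left _ _)) hr0))
  have hμ1le : μ 1 ≤ 1 := hμ.2.2.1 ▸ hμ.2.1.le_tsum 1 fun y _ => hμ.1 y
  refine ⟨B / μ 1, δ / 2, by positivity, by linarith, fun n hn => ?_⟩
  -- odd times are compared with the following even time through the holding probability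
  obtain ⟨m, hm1, hm2, hm3⟩ : ∃ m : ℕ, 1 ≤ m ∧ n ≤ 2 * m ∧
      μ 1 * convPow μ n 1 ≤ convPow μ (2 * m) 1 := by
    rcases Nat.even_or_odd' n with ⟨m, rfl | rfl⟩
    · refine ⟨m, by omega, le_rfl, ?_⟩
      have := convPow_nonneg hμ (2 * m) 1
      nlinarith
    · exact ⟨m + 1, by omega, by omega, mul_convPow_le hμ _⟩
  have h1 := hdecay m hm1
  simp only [norm_convVec_sq hμ] at h1
  have h2 : F (max (δ / 2 * n) 1) ≤ F (max (δ * m) 1) := by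
    refine hFmono (Set.mem_Ici.2 (le_max_right _ _)) (Set.mem_Ici.2 (le_max_right _ _))
      (max_le_max ?_ le_rfl)
    have : (n : ℝ) ≤ 2 * m := by exact_mod_cast hm2
    nlinarith
  have h3 := hFpos (max (δ / 2 * n) 1) (le_max_right _ _)
  have h4 : μ 1 * convPow μ n 1 ≤ B / F (max (δ / 2 * n) 1) :=
    (hm3.trans h1).trans (div_le_div_of_nonneg_left hB.le h3 h2)
  rw [div_right_comm, le_div_iff₀ hμ1, mul_comm]
  exact h4

end Conclusion

/-- volume lower bound on `K(r)` implies a lower bound on the spectral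
profile and an upper bound on the return probability, for `μ ∈ P(G,reg)`. -/
theorem stmt5 {G : Type*} [Group G] [Countable G]
    (hG : HasPolyGrowth G)
    (μ : G → ℝ) (hμ : IsSymmProb μ)
    (k : ℕ) (p0 : ℝ) (μ0 : G → ℝ) (p : Fin k → ℝ) (μi : Fin k → G → ℝ)
    (Hsub : Fin k → Subgroup G) (S : Fin k → Finset G) (φ : Fin k → ℝ → ℝ)
    (d : Fin k → ℝ)
    (hp0 : 0 ≤ p0) (hp : ∀ i, 0 < p i) (hpsum : p0 + ∑ i, p i = 1)
    (hμ0 : IsSymmProb μ0) (hμ0fin : (Function.support μ0).Finite)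
    (hμeq : ∀ g, μ g = p0 * μ0 g + ∑ i, p i * μi i g)
    (hμi : ∀ i, IsSymmProb (μi i)) (hμisupp : ∀ i, ∀ g, g ∉ Hsub i → μi i g = 0)
    (hSsymm : ∀ i, ∀ s ∈ S i, s⁻¹ ∈ S i)
    (hSgen : ∀ i, Subgroup.closure ((S i : Set G)) = Hsub i)
    (hgrowth : ∀ i, ∃ c C : ℝ, 0 < c ∧ c ≤ C ∧ ∀ r : ℝ, 1 ≤ r →
      c * r ^ d i ≤
        (({h : G | h ∈ Hsub i ∧ (wordLength (S i : Set G) h : ℝ) ≤ r}).ncard : ℝ) ∧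
      (({h : G | h ∈ Hsub i ∧ (wordLength (S i : Set G) h : ℝ) ≤ r}).ncard : ℝ) ≤
        C * r ^ d i)
    (hφpos : ∀ i, ∀ t : ℝ, 0 ≤ t → 0 < φ i t)
    (hφmono : ∀ i, MonotoneOn (φ i) (Set.Ici 0))
    (hφreg : ∀ i, ∃ γ : ℝ, 0 < γ ∧ RegVaryAt (φ i) γ)
    (hμicomp : ∀ i, ∃ c C : ℝ, 0 < c ∧ c ≤ C ∧ ∀ h ∈ Hsub i,
      (c ≤ μi i h * φ i (1 + (wordLength (S i : Set G) h : ℝ)) *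
        (1 + (wordLength (S i : Set G) h : ℝ)) ^ d i ∧
      μi i h * φ i (1 + (wordLength (S i : Set G) h : ℝ)) *
        (1 + (wordLength (S i : Set G) h : ℝ)) ^ d i ≤ C))
    (ε : ℝ) (hε : 0 < ε) (hεfin : ({g : G | ε < μ g}).Finite)
    (hεgen : Subgroup.closure {g : G | ε < μ g} = ⊤)
    (hεe : (1 : G) ∈ {g : G | ε < μ g})
    (Q : ℕ) (hQ : 1 ≤ Q)
    (F : ℝ → ℝ) (hFmono : MonotoneOn F (Set.Ici 1))
    (hFpos : ∀ t : ℝ, 1 ≤ t → 0 < F t)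
    (hFunb : ∀ M : ℝ, ∃ t : ℝ, 1 ≤ t ∧ M ≤ F t)
    (hFreg : ∃ γ : ℝ, 0 < γ ∧ RegVaryAt F γ)
    (hvol : ∀ r : ℝ, 1 ≤ r → ∃ A : Finset G,
      (A : Set G) ⊆ prodSet Q
        (Kset0 {g : G | ε < μ g} r ∪ ⋃ i, KsetI (Hsub i) (S i : Set G) (φ i) r) ∧
      F r ≤ (A.card : ℝ)) :
    ∃ c₁ c₂ c₃ c₄ : ℝ, 0 < c₁ ∧ 0 < c₂ ∧ 0 < c₃ ∧ 0 < c₄ ∧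
      (∀ v : ℝ, 1 ≤ v → c₁ / Finv F (c₂ * v) ≤ spectralProfile μ v) ∧
      (∀ n : ℕ, 1 ≤ n → convPow μ n 1 ≤ c₃ / F (max (c₄ * n) 1)) := by
  have hμ1 : 0 < μ 1 := hε.trans hεe
  have hpp : ∀ i, ∃ C : ℝ, 0 < C ∧ ∀ N : G → ℝ, IsGroupNorm N →
      Summable (fun g => μi i g * N g ^ 2) → ∀ h ∈ Hsub i,
      N h ^ 2 ≤ C * PhiOf (φ i) (wordLength (S i : Set G) h) * ∑' g, μi i g * N g ^ 2 := by
    intro i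
    obtain ⟨c₁, C₁, hc₁, -, hgr⟩ := hgrowth i
    obtain ⟨γ, hγ, hreg⟩ := hφreg i
    obtain ⟨c₂, C₂, hc₂, -, hcomp⟩ := hμicomp i
    exact pseudo_poincare (hSsymm i) (hSgen i) hc₁ hgr (hφpos i) (hφmono i) hγ hreg (hμi i).1 hc₂
      fun h hh => (hcomp h hh).1
  choose Ci hCi hCN using hpp
  have hle : ∀ i g, p i * μi i g ≤ μ g := by
    intro i g
    rw [hμeq]
    have h1 := Finset.single_le_sum (f := fun j => p j * μi j g)
      (fun j _ => mul_nonneg (hp j).le ((hμi j).1 g)) (Finset.mem_univ i)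
    have h2 := mul_nonneg hp0 (hμ0.1 g)
    linarith
  -- pseudo-Poincaré constant valid on the whole union of the sets `K_i(r)`
  set Cm : ℝ := ε⁻¹ + ∑ i, Ci i * (p i)⁻¹ with hCm
  have hterm0 : ∀ i, 0 ≤ Ci i * (p i)⁻¹ := fun i => mul_nonneg (hCi i).le (inv_nonneg.2 (hp i).le)
  have hsum0 : 0 ≤ ∑ i, Ci i * (p i)⁻¹ := Finset.sum_nonneg fun i _ => hterm0 i
  have hCmpos : 0 < Cm := add_pos_of_pos_of_nonneg (inv_pos.2 hε) hsum0
  have hQpos : (0 : ℝ) < Q := by exact_mod_cast hQ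
  have hnash : ∀ (f : EllTwo G) (L : ℝ), HasSum (fun x => |f x|) L → ∀ r : ℝ, 1 ≤ r →
      ‖f‖ ^ 2 ≤ (Q ^ 2 * Cm / 2) * r * (∑' y, μ y * ‖rtrans y f - f‖ ^ 2) + L ^ 2 / F r := by
    intro f L hL r hr
    have hN := isGroupNorm_displacement f
    have hsum := (hasSum_energy hμ f).summable
    set N : G → ℝ := fun h => ‖rtrans h f - f‖ with hNdef
    set E := ∑' y, μ y * N y ^ 2 with hE
    have hE0 : 0 ≤ E := tsum_nonneg fun y => mul_nonneg (hμ.1 y) (sq_nonneg _)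
    have hrE : 0 ≤ r * E := mul_nonneg (by linarith) hE0
    have hU : ∀ h ∈ Kset0 {g : G | ε < μ g} r ∪ ⋃ i, KsetI (Hsub i) (S i : Set G) (φ i) r,
        N h ≤ Real.sqrt (Cm * (r * E)) := by
      intro h hh
      refine Real.le_sqrt_of_sq_le ?_
      rcases hh with hh | hh
      · have h1 := pseudo_poincare_generators hμ.1 hμ.2.2.2 hε hεgen hN hsum h
        have h2 : (wordLength {g : G | ε < μ g} h : ℝ) ^ 2 ≤ r := (le_max_right _ _).trans hh
        calc N h ^ 2 ≤ ε⁻¹ * r * E := h1.trans (mul_le_mul_of_nonneg_right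
              (mul_le_mul_of_nonneg_left h2 (inv_nonneg.2 hε.le)) hE0)
          _ = ε⁻¹ * (r * E) := by ring
          _ ≤ _ := mul_le_mul_of_nonneg_right (le_add_of_nonneg_right hsum0) hrE
      · obtain ⟨i, hi, hΦ⟩ := Set.mem_iUnion.1 hh
        obtain ⟨hs, hEi⟩ := component_energy_le (fun g => sq_nonneg (N g)) hsum (hμi i).1 (hp i)
          (hle i)
        have hEi0 : 0 ≤ ∑' g, μi i g * N g ^ 2 :=
          tsum_nonneg fun y => mul_nonneg ((hμi i).1 y) (sq_nonneg _)
        have h1 := hCN i N hN hs h hi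
        have h2 : Ci i * (p i)⁻¹ ≤ Cm :=
          (Finset.single_le_sum (fun j _ => hterm0 j) (Finset.mem_univ i)).trans
            (le_add_of_nonneg_left (inv_nonneg.2 hε.le))
        calc N h ^ 2 ≤ Ci i * r * ∑' g, μi i g * N g ^ 2 := h1.trans
              (mul_le_mul_of_nonneg_right (mul_le_mul_of_nonneg_left hΦ (hCi i).le) hEi0)
          _ ≤ Ci i * r * ((p i)⁻¹ * E) :=
              mul_le_mul_of_nonneg_left hEi (mul_nonneg (hCi i).le (by linarith))
          _ = Ci i * (p i)⁻¹ * (r * E) := by ring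
          _ ≤ _ := mul_le_mul_of_nonneg_right h2 hrE
    obtain ⟨A, hA, hFA⟩ := hvol r hr
    have hb : ∀ h ∈ A, ‖rtrans h f - f‖ ^ 2 ≤ 2 * (Q ^ 2 * Cm / 2 * r * E) := by
      intro h hh
      obtain ⟨l, hlQ, hlU, rfl⟩ := hA hh
      have h1 := hN.list_prod_le l fun x hx => hU x (hlU x hx)
      have h2 := pow_le_pow_left₀ (hN.1 _) h1 2
      rw [mul_pow, Real.sq_sqrt (mul_nonneg hCmpos.le hrE), hlQ] at h2
      exact h2.trans (le_of_eq (by ring))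
    have h1 := card_mul_norm_sq_le f hL A hb
    have hF := hFpos r hr
    have hA0 : (0 : ℝ) < A.card := hF.trans_le hFA
    have h2 : ‖f‖ ^ 2 ≤ Q ^ 2 * Cm / 2 * r * E + L ^ 2 / A.card := by
      rw [← sub_le_iff_le_add', le_div_iff₀ hA0]
      linarith
    exact h2.trans (add_le_add le_rfl (div_le_div_of_nonneg_left (sq_nonneg L) hF hFA))
  have hC : 0 < (Q : ℝ) ^ 2 * Cm / 2 := by positivity
  obtain ⟨γ, -, hreg⟩ := hFreg
  obtain ⟨c₃, c₄, hc₃, hc₄, hret⟩ :=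
    return_probability_le hμ hμ1 hFmono hFpos hreg hC hnash
  exact ⟨1 / (4 * (Q ^ 2 * Cm / 2)), 2, c₃, c₄, by positivity, two_pos, hc₃, hc₄,
    fun v hv => finv_spectral_le hμ hFpos hFunb hC hnash hv, hret⟩
end
end

section
/- Let G be a finitely generated group of polynomial volume growth, Σ = (s₁,…,s_q) a finite generating tuple of elements of G, and for each s ∈ Σ let F_s : [0,∞) → [0,∞) be a C¹ increasing bijection, regularly varying at infinity of index w(s) ∈ (0,1), whose inverse F_s^{-1} is C¹ and satisfies sup_{t∈[0,T]} (F_s^{-1})′(t) ≤ C_s F_s^{-1}(T)/T for all T > 0. Fix A₁, A₂, A₃ ≥ 1. Then there is a constant C, depending only on the weight system and A₁, A₂, A₃, such that for all g, h ∈ G, all R ≥ 1, and every word ω over Σ ∪ Σ^{-1} with h = ω in G satisfying ‖g‖_𝔉 ≤ A₁R, ‖h‖_𝔉 ≤ A₂R, and F_σ^{-1}(deg_σ(ω)) ≤ A₃R for every σ ∈ Σ, one has | ‖gh‖_𝔉 − ‖g‖_𝔉 | ≤ C · max_{σ∈Σ} { (R/F_σ(R)) · deg_σ(ω) }. -/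
/-!
If `g` is represented by a word `v` with `deg_i v ≤ F_i(r)`, then `g * h` is represented by `v ++ ω`,
so `‖gh‖ ≤ max_i F_i⁻¹(F_i(r) + deg_i ω)`. The mean value theorem and the derivative bound at
`T = 2 F_i(A R)` give `F_i⁻¹(F_i(r) + d) ≤ r + C_i (F_i⁻¹(T) / T) d` (`inv_add_le`), and regular
variation with positive index gives `2 F_i(A R) ≤ F_i(K R)` for `R ≥ 1` (`exists_doubling`), hence
`F_i⁻¹(T) / T ≤ K R / F_i(R)`. This bounds `‖gh‖ - ‖g‖` from above (`wNorm_mul_le`).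

For the other direction the same bound is applied to `g = (gh) h⁻¹` with the formal inverse of `ω`.
It requires `‖gh‖ ≤ A₁ R`, which holds in the only case of interest, `‖gh‖ ≤ ‖g‖`.
-/


open scoped BigOperators Classical

noncomputable section

/-- Evaluation in `G` of a formal word over `Σ ∪ Σ⁻¹` (a letter is an index in `Fin q`
together with a Boolean sign). -/
def wordEval {G : Type*} [Group G] {q : ℕ} (s : Fin q → G)
    (ω : List (Fin q × Bool)) : G :=
  (ω.map (fun p => if p.2 then s p.1 else (s p.1)⁻¹)).prod

/-- `deg_i(ω)` : the number of occurrences of the letter `i` (as `s_i` or `s_i⁻¹`). -/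
def wordDeg {q : ℕ} (ω : List (Fin q × Bool)) (i : Fin q) : ℕ :=
  ω.countP (fun p => p.1 = i)

/-- The quasi-norm `‖g‖_𝔉` : the least `R ≥ 0` such that `g` is represented by a word
using the letter `s_i` (or its inverse) at most `F_i(R)` times, for every `i`. -/
def wNorm {G : Type*} [Group G] {q : ℕ} (s : Fin q → G) (F : Fin q → ℝ → ℝ)
    (g : G) : ℝ :=
  sInf { R : ℝ | 0 ≤ R ∧ ∃ ω : List (Fin q × Bool), wordEval s ω = g ∧
    ∀ i, (wordDeg ω i : ℝ) ≤ F i R }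

/-! ### Words -/

theorem wordEval_append {G : Type*} [Group G] {q : ℕ} (s : Fin q → G)
    (v ω : List (Fin q × Bool)) : wordEval s (v ++ ω) = wordEval s v * wordEval s ω := by
  simp [wordEval]

theorem wordDeg_append {q : ℕ} (v ω : List (Fin q × Bool)) (i : Fin q) :
    wordDeg (v ++ ω) i = wordDeg v i + wordDeg ω i := by
  simp [wordDeg]

theorem exists_inv_word {G : Type*} [Group G] {q : ℕ} (s : Fin q → G)
    (ω : List (Fin q × Bool)) :
    ∃ ω', wordEval s ω' = (wordEval s ω)⁻¹ ∧ ∀ i, wordDeg ω' i = wordDeg ω i := by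
  induction ω with
  | nil => exact ⟨[], by simp [wordEval], fun _ => rfl⟩
  | cons p l ih =>
    obtain ⟨l', h1, h2⟩ := ih
    refine ⟨l' ++ [(p.1, !p.2)], ?_, fun i => ?_⟩
    · rw [wordEval_append, h1]
      rcases p with ⟨j, b⟩
      cases b <;> simp [wordEval]
    · rw [wordDeg_append, h2]
      simp [wordDeg, List.countP_cons]

theorem exists_word_s6 {G : Type*} [Group G] {q : ℕ} (s : Fin q → G)
    (hgen : Subgroup.closure (Set.range s) = ⊤) (g : G) : ∃ ω, wordEval s ω = g := by
  have hg : g ∈ Subgroup.closure (Set.range s) := hgen ▸ Subgroup.mem_top g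
  induction hg using Subgroup.closure_induction with
  | mem x hx =>
    obtain ⟨i, rfl⟩ := hx
    exact ⟨[(i, true)], by simp [wordEval]⟩
  | one => exact ⟨[], by simp [wordEval]⟩
  | mul x y _ _ hx hy =>
    obtain ⟨v, rfl⟩ := hx
    obtain ⟨u, rfl⟩ := hy
    exact ⟨v ++ u, wordEval_append s v u⟩
  | inv x _ hx =>
    obtain ⟨v, rfl⟩ := hx
    obtain ⟨u, hu, _⟩ := exists_inv_word s v
    exact ⟨u, hu⟩

/-! ### Estimates for a single weight function -/

/-- Positive index of regular variation: multiplying the argument by a large constant at least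
doubles `F`, uniformly in `R ≥ 1`. -/
theorem exists_doubling_s6 {F : ℝ → ℝ} (hmono : StrictMonoOn F (Set.Ici 0)) (hF0 : F 0 = 0)
    {w : ℝ} (hw : 0 < w) (hreg : RegVaryAt F w) {A : ℝ} (hA : 1 ≤ A) :
    ∃ K : ℝ, 0 < K ∧ ∀ R : ℝ, 1 ≤ R → 2 * F (A * R) ≤ F (K * R) := by
  -- This dilation has `l ^ w = 3 > 2`.
  set l : ℝ := (3 : ℝ) ^ (1 / w) with hl
  have hl0 : 0 < l := by positivity
  have hlw : l ^ w = 3 := by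
    rw [hl, ← Real.rpow_mul (by norm_num)]
    field_simp
    norm_num
  have hev := (hreg l hl0).eventually (lt_mem_nhds (show (2 : ℝ) < l ^ w by rw [hlw]; norm_num))
  obtain ⟨t₀, ht₀⟩ := Filter.eventually_atTop.1 hev
  set t₁ := max t₀ 1
  have ht1 : 1 ≤ t₁ := le_max_right _ _
  refine ⟨l * t₁ * A, by positivity, fun R hR => ?_⟩
  have hAR : 1 ≤ A * R := one_le_mul_of_one_le_of_one_le hA hR
  -- Enlarging `A * R` by the factor `t₁` reaches the range where the asymptotics apply.
  have hge : t₁ ≤ t₁ * (A * R) := le_mul_of_one_le_right (by linarith) hAR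
  have h2 := ht₀ (t₁ * (A * R)) ((le_max_left _ _).trans hge)
  have hpos : 0 < F (t₁ * (A * R)) := by
    rw [← hF0]
    exact hmono Set.self_mem_Ici (Set.mem_Ici.2 (by positivity)) (by positivity)
  rw [lt_div_iff₀ hpos] at h2
  have h3 : F (A * R) ≤ F (t₁ * (A * R)) :=
    hmono.monotoneOn (Set.mem_Ici.2 (by positivity)) (Set.mem_Ici.2 (by positivity))
      (le_mul_of_one_le_left (by positivity) ht1)
  have h4 : l * t₁ * A * R = l * (t₁ * (A * R)) := by ring
  rw [h4]
  linarith

/-- Mean value estimate for the inverse weight function. -/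
theorem inv_add_le {F FInv : ℝ → ℝ} (hInvL : ∀ t : ℝ, 0 ≤ t → FInv (F t) = t)
    (hInvC1 : ContDiffOn ℝ 1 FInv (Set.Ici 0)) {M T : ℝ}
    (hd : ∀ t ∈ Set.Icc (0 : ℝ) T, deriv FInv t ≤ M)
    {r d : ℝ} (hr : 0 ≤ r) (hFr : 0 ≤ F r) (hd0 : 0 ≤ d) (hT : F r + d ≤ T) :
    FInv (F r + d) ≤ r + M * d := by
  have hsub : Set.Icc (0 : ℝ) T ⊆ Set.Ici 0 := Set.Icc_subset_Ici_self
  have h := (convex_Icc (0 : ℝ) T).image_sub_le_mul_sub_of_deriv_le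
    (hInvC1.continuousOn.mono hsub) (f := FInv) (C := M)
    ((hInvC1.differentiableOn (by norm_num)).mono (interior_subset.trans hsub))
    (fun x hx => hd x (interior_subset hx))
    (F r) ⟨hFr, by linarith⟩ (F r + d) ⟨by linarith, hT⟩ (by linarith)
  rw [hInvL r hr] at h
  have : M * (F r + d - F r) = M * d := by ring
  linarith

/-- Uniform increment bound: in the range `r ≤ B₁ R`, `F⁻¹(d) ≤ B₂ R`, the function `F⁻¹` has slope
`O(R / F(R))` between `F(r)` and `F(r) + d`. -/
theorem exists_increment_bound {F FInv : ℝ → ℝ} (hF0 : F 0 = 0)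
    (hmono : StrictMonoOn F (Set.Ici 0)) (hmaps : ∀ t : ℝ, 0 ≤ t → 0 ≤ F t)
    (hFsurj : Set.Ici (0 : ℝ) ⊆ F '' Set.Ici 0)
    (hInvL : ∀ t : ℝ, 0 ≤ t → FInv (F t) = t)
    (hInvC1 : ContDiffOn ℝ 1 FInv (Set.Ici 0))
    (hreg : ∃ w : ℝ, 0 < w ∧ w < 1 ∧ RegVaryAt F w)
    (hderiv : ∃ Ci : ℝ, ∀ T : ℝ, 0 < T → ∀ t ∈ Set.Icc (0 : ℝ) T,
      deriv FInv t ≤ Ci * FInv T / T)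
    {B₁ : ℝ} (B₂ : ℝ) (hB₁ : 1 ≤ B₁) :
    ∃ C : ℝ, 0 ≤ C ∧ ∀ r d R : ℝ, 1 ≤ R → 0 ≤ r → r ≤ B₁ * R → 0 ≤ d → FInv d ≤ B₂ * R →
      FInv (F r + d) ≤ r + C * (R / F R * d) := by
  obtain ⟨w, hw, -, hrv⟩ := hreg
  obtain ⟨c, hc⟩ := hderiv
  set A := max B₁ B₂
  have hA : 1 ≤ A := hB₁.trans (le_max_left _ _)
  obtain ⟨K, hK, hdoub⟩ := exists_doubling_s6 hmono hF0 hw hrv hA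
  refine ⟨|c| * K, by positivity, fun r d R hR hr hrB hd hdB => ?_⟩
  have hR0 : 0 < R := by linarith
  have hFR : 0 < F R := by
    rw [← hF0]
    exact hmono Set.self_mem_Ici (Set.mem_Ici.2 hR0.le) hR0
  have hAR : 0 ≤ A * R := by positivity
  have hle {x y : ℝ} (hx : 0 ≤ x) (hxy : x ≤ y) : F x ≤ F y :=
    hmono.monotoneOn hx (hx.trans hxy) hxy
  have hFA : F R ≤ F (A * R) := hle hR0.le (le_mul_of_one_le_left hR0.le hA)
  have hFr : F r ≤ F (A * R) :=
    hle hr (hrB.trans (mul_le_mul_of_nonneg_right (le_max_left _ _) hR0.le))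
  have hdA : d ≤ F (A * R) := by
    obtain ⟨u, hu, rfl⟩ := hFsurj hd
    rw [hInvL u hu] at hdB
    exact hle hu (hdB.trans (mul_le_mul_of_nonneg_right (le_max_right _ _) hR0.le))
  set T := 2 * F (A * R) with hTdef
  have hT0 : 0 < T := by linarith
  obtain ⟨u, hu, huT⟩ := hFsurj (show T ∈ Set.Ici 0 from hT0.le)
  have huK : u ≤ K * R := by
    rw [← hmono.le_iff_le hu (Set.mem_Ici.2 (by positivity)), huT]
    exact hdoub R hR
  have hIT : FInv T = u := by rw [← huT, hInvL u hu]
  have hu0 : 0 ≤ u := hu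
  have hM : c * FInv T / T ≤ |c| * K * (R / F R) := by
    rw [hIT]
    calc c * u / T ≤ |c| * (K * R) / F R := by
          gcongr
          · exact le_abs_self c
          · linarith
      _ = |c| * K * (R / F R) := by ring
  have h := inv_add_le hInvL hInvC1 (fun t ht => (hc T hT0 t ht).trans hM) hr (hmaps r hr) hd
    (show F r + d ≤ T by linarith)
  linarith

/-! ### The quasi-norm -/

/-- Almost optimal words: any `r > ‖g‖` is an admissible radius. -/
theorem exists_word_of_wNorm_lt {G : Type*} [Group G] {q : ℕ} {s : Fin q → G}
    (hgen : Subgroup.closure (Set.range s) = ⊤) {F : Fin q → ℝ → ℝ}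
    (hFmono : ∀ i, StrictMonoOn (F i) (Set.Ici 0))
    (hFsurj : ∀ i, Set.Ici (0 : ℝ) ⊆ F i '' Set.Ici 0)
    {g : G} {r : ℝ} (hr : wNorm s F g < r) :
    0 ≤ r ∧ ∃ v, wordEval s v = g ∧ ∀ i, (wordDeg v i : ℝ) ≤ F i r := by
  have hne : { R : ℝ | 0 ≤ R ∧ ∃ ω : List (Fin q × Bool), wordEval s ω = g ∧
      ∀ i, (wordDeg ω i : ℝ) ≤ F i R }.Nonempty := by
    obtain ⟨ω, hω⟩ := exists_word_s6 s hgen g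
    choose u hu hud using fun i =>
      hFsurj i (show (wordDeg ω i : ℝ) ∈ Set.Ici 0 from Set.mem_Ici.2 (Nat.cast_nonneg _))
    have hu' : ∀ i, 0 ≤ u i := hu
    refine ⟨∑ i, u i, Finset.sum_nonneg fun i _ => hu' i, ω, hω, fun i => ?_⟩
    rw [← hud i]
    exact (hFmono i).monotoneOn (hu i) (Finset.sum_nonneg fun i _ => hu' i)
      (Finset.single_le_sum (fun j _ => hu' j) (Finset.mem_univ i))
  obtain ⟨r', ⟨h0, v, hv, hdeg⟩, hlt⟩ := exists_lt_of_csInf_lt hne hr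
  exact ⟨h0.trans hlt.le, v, hv, fun i =>
    (hdeg i).trans ((hFmono i).monotoneOn h0 (h0.trans hlt.le) hlt.le)⟩

/-- One-sided form of the Lipschitz estimate. -/
theorem wNorm_mul_le {G : Type*} [Group G] {q : ℕ} {s : Fin q → G}
    (hgen : Subgroup.closure (Set.range s) = ⊤) {F FInv : Fin q → ℝ → ℝ}
    (hF0 : ∀ i, F i 0 = 0) (hFmono : ∀ i, StrictMonoOn (F i) (Set.Ici 0))
    (hFmaps : ∀ i, ∀ t : ℝ, 0 ≤ t → 0 ≤ F i t)
    (hFsurj : ∀ i, Set.Ici (0 : ℝ) ⊆ F i '' Set.Ici 0)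
    (hInvL : ∀ i, ∀ t : ℝ, 0 ≤ t → FInv i (F i t) = t)
    (hInvC1 : ∀ i, ContDiffOn ℝ 1 (FInv i) (Set.Ici 0))
    (hreg : ∀ i, ∃ w : ℝ, 0 < w ∧ w < 1 ∧ RegVaryAt (F i) w)
    (hderiv : ∀ i, ∃ Ci : ℝ, ∀ T : ℝ, 0 < T → ∀ t ∈ Set.Icc (0 : ℝ) T,
      deriv (FInv i) t ≤ Ci * FInv i T / T)
    {A₁ : ℝ} (A₃ : ℝ) (hA₁ : 1 ≤ A₁) :
    ∃ C : ℝ, 0 ≤ C ∧ ∀ (g : G) (R : ℝ) (ω : List (Fin q × Bool)), 1 ≤ R →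
      wNorm s F g ≤ A₁ * R → (∀ i, FInv i (wordDeg ω i : ℝ) ≤ A₃ * R) →
      wNorm s F (g * wordEval s ω) ≤
        wNorm s F g + C * ⨆ i : Fin q, (R / F i R) * (wordDeg ω i : ℝ) := by
  -- The extra `1` in `A₁ + 1` leaves room for the slack `ε ≤ 1` in the choice of the word for `g`.
  choose C hC0 hC using fun i => exists_increment_bound (hF0 i) (hFmono i) (hFmaps i) (hFsurj i)
    (hInvL i) (hInvC1 i) (hreg i) (hderiv i) A₃ (show 1 ≤ A₁ + 1 by linarith)
  refine ⟨∑ i, C i, Finset.sum_nonneg fun i _ => hC0 i, fun g R ω hR hg hω => ?_⟩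
  have hterm : ∀ i, 0 ≤ R / F i R * (wordDeg ω i : ℝ) := fun i =>
    mul_nonneg (div_nonneg (by linarith) (hFmaps i R (by linarith))) (Nat.cast_nonneg _)
  set S := ⨆ i : Fin q, (R / F i R) * (wordDeg ω i : ℝ)
  have hS0 : 0 ≤ S := Real.iSup_nonneg hterm
  have hS : ∀ i, R / F i R * (wordDeg ω i : ℝ) ≤ S :=
    fun i => le_ciSup (f := fun i : Fin q => (R / F i R) * (wordDeg ω i : ℝ))
      (Set.finite_range _).bddAbove i
  have hCS : 0 ≤ (∑ i, C i) * S := mul_nonneg (Finset.sum_nonneg fun i _ => hC0 i) hS0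
  suffices hkey : ∀ r, wNorm s F g < r → r ≤ wNorm s F g + 1 →
      wNorm s F (g * wordEval s ω) ≤ r + (∑ i, C i) * S by
    refine le_of_forall_pos_le_add fun ε hε => ?_
    have h := hkey (wNorm s F g + min ε 1) (by simp [hε]) (by simp)
    have := min_le_left ε 1
    linarith
  intro r hr hr1
  obtain ⟨hr0, v, hv, hdeg⟩ := exists_word_of_wNorm_lt hgen hFmono hFsurj hr
  refine csInf_le ⟨0, fun x hx => hx.1⟩ ⟨by linarith, v ++ ω, ?_, fun i => ?_⟩
  · rw [wordEval_append, hv]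
  · have hd0 : (0 : ℝ) ≤ wordDeg ω i := Nat.cast_nonneg _
    have hb := hC i r (wordDeg ω i) R hR hr0 (by linarith) hd0 (hω i)
    obtain ⟨u, hu, hFu⟩ := hFsurj i
      (show F i r + (wordDeg ω i : ℝ) ∈ Set.Ici 0 from add_nonneg (hFmaps i r hr0) hd0)
    rw [← hFu, hInvL i u hu] at hb
    have h1 : C i * (R / F i R * (wordDeg ω i : ℝ)) ≤ (∑ i, C i) * S :=
      mul_le_mul (Finset.single_le_sum (fun j _ => hC0 j) (Finset.mem_univ i)) (hS i) (hterm i)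
        (Finset.sum_nonneg fun i _ => hC0 i)
    rw [wordDeg_append, Nat.cast_add]
    calc (wordDeg v i : ℝ) + wordDeg ω i ≤ F i r + wordDeg ω i := by linarith [hdeg i]
      _ = F i u := hFu.symm
      _ ≤ F i (r + (∑ i, C i) * S) :=
        (hFmono i).monotoneOn hu (Set.mem_Ici.2 (by linarith)) (by linarith)

/-- Lipschitz-type estimate for the quasi-norm `‖·‖_𝔉` along a word `ω`. -/
theorem stmt6 {G : Type*} [Group G] [Countable G] (hG : HasPolyGrowth G)
    (q : ℕ) (hq : 0 < q) (s : Fin q → G)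
    (hgen : Subgroup.closure (Set.range s) = ⊤)
    (F FInv : Fin q → ℝ → ℝ)
    (hF0 : ∀ i, F i 0 = 0) (hFmono : ∀ i, StrictMonoOn (F i) (Set.Ici 0))
    (hFmaps : ∀ i, ∀ t : ℝ, 0 ≤ t → 0 ≤ F i t)
    (hFsurj : ∀ i, Set.Ici (0 : ℝ) ⊆ F i '' Set.Ici 0)
    (hFC1 : ∀ i, ContDiffOn ℝ 1 (F i) (Set.Ici 0))
    (hInvL : ∀ i, ∀ t : ℝ, 0 ≤ t → FInv i (F i t) = t)
    (hInvR : ∀ i, ∀ t : ℝ, 0 ≤ t → F i (FInv i t) = t)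
    (hInvC1 : ∀ i, ContDiffOn ℝ 1 (FInv i) (Set.Ici 0))
    (hreg : ∀ i, ∃ w : ℝ, 0 < w ∧ w < 1 ∧ RegVaryAt (F i) w)
    (hderiv : ∀ i, ∃ Ci : ℝ, ∀ T : ℝ, 0 < T → ∀ t ∈ Set.Icc (0 : ℝ) T,
      deriv (FInv i) t ≤ Ci * FInv i T / T)
    (A₁ A₂ A₃ : ℝ) (hA₁ : 1 ≤ A₁) (hA₂ : 1 ≤ A₂) (hA₃ : 1 ≤ A₃) :
    ∃ C : ℝ, ∀ (g h : G) (R : ℝ) (ω : List (Fin q × Bool)), 1 ≤ R →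
      wordEval s ω = h →
      wNorm s F g ≤ A₁ * R → wNorm s F h ≤ A₂ * R →
      (∀ i, FInv i (wordDeg ω i : ℝ) ≤ A₃ * R) →
      |wNorm s F (g * h) - wNorm s F g| ≤
        C * ⨆ i : Fin q, (R / F i R) * (wordDeg ω i : ℝ) := by
  obtain ⟨C, hC0, hC⟩ := wNorm_mul_le hgen hF0 hFmono hFmaps hFsurj hInvL hInvC1 hreg hderiv A₃ hA₁
  refine ⟨C, fun g h R ω hR hω hg _ hdeg => ?_⟩
  subst hω
  have hS0 : 0 ≤ ⨆ i : Fin q, (R / F i R) * (wordDeg ω i : ℝ) := Real.iSup_nonneg fun i =>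
    mul_nonneg (div_nonneg (by linarith) (hFmaps i R (by linarith))) (Nat.cast_nonneg _)
  have hup := hC g R ω hR hg hdeg
  obtain ⟨ω', hev, hdeg'⟩ := exists_inv_word s ω
  rw [abs_le]
  refine ⟨?_, by linarith⟩
  rcases le_total (wNorm s F (g * wordEval s ω)) (wNorm s F g) with hle | hle
  · have hdn := hC (g * wordEval s ω) R ω' hR (hle.trans hg) (fun i => by rw [hdeg']; exact hdeg i)
    simp only [hdeg', hev, mul_inv_cancel_right] at hdn
    linarith
  · linarith [mul_nonneg hC0 hS0]
end
end

section
/- Let G be a countable group, μ a symmetric probability measure on G, ‖·‖ a norm on G (i.e. ‖gh‖ ≤ ‖g‖+‖h‖, ‖g⁻¹‖ = ‖g‖, ‖e‖ = 0), w* > 0, and 𝐅 : [1,∞) → (0,∞) increasing. Assume: (i) sup_{x∈G} μ^{(n)}(x) ≤ C₀/𝐅(n) for all integers n ≥ 1; (ii) 𝐅(2t) ≤ A 𝐅(t) for all t ≥ 1, for some A ≥ 1; (iii) for every δ' > 0 there is γ > 0 such that P_e(max_{0≤k≤n} ‖X_k‖ ≥ γ n^{w*}) ≤ δ' for all n ≥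 1, where (X_k) is the random walk driven by μ. Then for every δ > 0 there exists κ = κ(δ) > 0 such that for all integers n ≥ 1, all x, y ∈ G and all subsets A ⊆ G with inf_{a∈A} ‖x⁻¹a‖ ≥ κ n^{w*} and inf_{a∈A} ‖y⁻¹a‖ ≥ κ n^{w*}: P_x(X_n = y and σ_A ≤ n) ≤ δ/𝐅(n), where σ_A = inf{k ≥ 1 : X_k ∈ A}. -/
/-!
Split the time interval at `p = ⌊n/2⌋` and put `q = n - p`. If the walk visits the far set by
time `p`, it has made an excursion of size at least `κ n^{w*}` within `p` steps, and
still has to reach `y` in `q` steps. By the Markov property at the fixed time `p`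
(`walkProb_early_hit_le`) the probability is at most `P_e(max ≥ κ n^{w*}) · sup μ^{(q)}`, where the
first factor is at most `δ'` by the control hypothesis and the second at most `C₀ A² / F n` by
doubling. If the visit happens after time `p`, reverse the trajectory: as `μ` is symmetric,
inverting the steps and running them backwards preserves weights and turns paths from `x` to `y`
into paths from `y` to `x`, which now visit the set by time `q` (`walkProb_late_hit_le`), so the
same bound applies from `y`. Taking `δ' = δ / (2 C₀ A²)` makes the two contributions sum to
`δ / F n`.

The Markov property needs the identification of convolution powers with sums over trajectories,
`tsum_endpoint_eq_convPow`, proved by induction on the number of steps.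
-/

open scoped BigOperators Classical

noncomputable section

/-- The trajectory of the walk started at `x` with steps `ω` : `X_k = x·ω₁⋯ω_k`. -/
def walkPath {G : Type*} [Group G] (x : G) {n : ℕ} (ω : Fin n → G) (k : ℕ) : G :=
  x * ((List.ofFn ω).take k).prod

/-- The probability that the `n`-step random walk driven by `μ` started at `x`
has a trajectory satisfying `E`. -/
def walkProb {G : Type*} [Group G] (μ : G → ℝ) (x : G) (n : ℕ)
    (E : (ℕ → G) → Prop) : ℝ :=
  ∑' ω : Fin n → G,
    Set.indicator {ω : Fin n → G | E (walkPath x ω)} (fun ω => ∏ j, μ (ω j)) ω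

/-! ### Weights of step strings -/

/-- The weight `∏ j, μ (ω j)` of a string of steps: the probability that the walk makes exactly
these steps. -/
def stepWeight {G : Type*} (μ : G → ℝ) {n : ℕ} (ω : Fin n → G) : ℝ := ∏ j, μ (ω j)

section Weight

variable {G : Type*} {μ : G → ℝ}

theorem stepWeight_append {p q : ℕ} (a : Fin p → G) (b : Fin q → G) :
    stepWeight μ (Fin.append a b) = stepWeight μ a * stepWeight μ b := by
  simp [stepWeight, Fin.prod_univ_add]

theorem stepWeight_snoc {q : ℕ} (b : Fin q → G) (g : G) :
    stepWeight μ (Fin.snoc b g : Fin (q + 1) → G) = stepWeight μ b * μ g := by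
  simp [stepWeight, Fin.prod_univ_castSucc]

variable [Group G]

theorem stepWeight_nonneg (hμ : IsSymmProb μ) {n : ℕ} (ω : Fin n → G) : 0 ≤ stepWeight μ ω :=
  Finset.prod_nonneg fun _ _ => hμ.1 _

theorem summable_stepWeight (hμ : IsSymmProb μ) (n : ℕ) :
    Summable (fun ω : Fin n → G => stepWeight μ ω) := by
  induction n with
  | zero => exact (hasSum_fintype _).summable
  | succ q ih =>
    rw [← (Fin.snocEquiv (fun _ : Fin (q + 1) => G)).summable_iff]
    have h := hμ.2.1.mul_of_nonneg ih hμ.1 (fun ω => stepWeight_nonneg hμ ω)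
    refine h.congr fun c => ?_
    have h2 := stepWeight_snoc (μ := μ) c.2 c.1
    simp only [Function.comp, Fin.snocEquiv, Equiv.coe_fn_mk]
    rw [mul_comm]
    exact h2.symm

theorem summable_indicator_stepWeight (hμ : IsSymmProb μ) {n : ℕ} (S : Set (Fin n → G)) :
    Summable (S.indicator fun ω => stepWeight μ ω) :=
  (summable_stepWeight hμ n).indicator S

theorem walkProb_eq (x : G) (n : ℕ) (E : (ℕ → G) → Prop) :
    walkProb μ x n E = ∑' ω : Fin n → G,
      Set.indicator {ω : Fin n → G | E (walkPath x ω)} (fun ω => stepWeight μ ω) ω := rfl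

theorem walkProb_mono (hμ : IsSymmProb μ) {x : G} {n : ℕ} {E E' : (ℕ → G) → Prop}
    (h : ∀ ω : Fin n → G, E (walkPath x ω) → E' (walkPath x ω)) :
    walkProb μ x n E ≤ walkProb μ x n E' := by
  rw [walkProb_eq, walkProb_eq]
  refine Summable.tsum_le_tsum (fun ω => ?_) (summable_indicator_stepWeight hμ _)
    (summable_indicator_stepWeight hμ _)
  exact Set.indicator_le_indicator_of_subset h (fun ω => stepWeight_nonneg hμ ω) ω

theorem walkProb_or_le (hμ : IsSymmProb μ) (x : G) (n : ℕ) (E E' : (ℕ → G) → Prop) :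
    walkProb μ x n (fun X => E X ∨ E' X) ≤ walkProb μ x n E + walkProb μ x n E' := by
  simp only [walkProb_eq]
  rw [← Summable.tsum_add (summable_indicator_stepWeight hμ _)
    (summable_indicator_stepWeight hμ _)]
  refine Summable.tsum_le_tsum (fun ω => ?_) (summable_indicator_stepWeight hμ _)
    ((summable_indicator_stepWeight hμ _).add (summable_indicator_stepWeight hμ _))
  have := stepWeight_nonneg hμ ω
  by_cases h1 : E (walkPath x ω) <;> by_cases h2 : E' (walkPath x ω) <;>
    simp [Set.indicator, h1, h2, this]

end Weight

/-! ### Trajectories and their time reversal -/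

section Path

variable {G : Type*} [Group G]

theorem walkPath_eq_mul (x : G) {n : ℕ} (ω : Fin n → G) (k : ℕ) :
    walkPath x ω k = x * walkPath 1 ω k := by simp [walkPath]

theorem walkPath_append_of_le (x : G) {p q : ℕ} (a : Fin p → G) (b : Fin q → G) {k : ℕ}
    (hk : k ≤ p) : walkPath x (Fin.append a b) k = walkPath x a k := by
  simp only [walkPath, List.ofFn_fin_append]
  rw [List.take_append_of_le_length (by simpa using hk)]

theorem walkPath_end (x : G) {n : ℕ} (ω : Fin n → G) :
    walkPath x ω n = x * (List.ofFn ω).prod := by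
  simp only [walkPath]
  rw [List.take_of_length_le (by simp)]

theorem walkPath_append_end (x : G) {p q : ℕ} (a : Fin p → G) (b : Fin q → G) :
    walkPath x (Fin.append a b) (p + q) = walkPath x a p * walkPath 1 b q := by
  simp [walkPath_end, mul_assoc]

theorem walkPath_snoc_end {q : ℕ} (b : Fin q → G) (g : G) :
    walkPath 1 (Fin.snoc b g : Fin (q + 1) → G) (q + 1) = walkPath 1 b q * g := by
  rw [walkPath_end, walkPath_end, List.ofFn_succ']
  simp [List.concat_eq_append]

/-- The steps of the time-reversed trajectory. -/
def revSteps {n : ℕ} : (Fin n → G) ≃ (Fin n → G) :=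
  Function.Involutive.toPerm (fun ω i => (ω i.rev)⁻¹) fun ω => by ext i; simp

theorem ofFn_revSteps {n : ℕ} (ω : Fin n → G) :
    List.ofFn (revSteps ω) = ((List.ofFn ω).map fun g => g⁻¹).reverse := by
  refine List.ext_getElem (by simp) fun i h1 h2 => ?_
  simp only [List.length_ofFn] at h1
  simp only [List.getElem_ofFn, List.getElem_reverse, List.getElem_map, List.length_map,
    List.length_ofFn]
  change (ω _)⁻¹ = _
  congr 2
  ext
  simp [Fin.rev]
  omega

/-- Reversing the steps of a trajectory from `x` to `y` gives the same trajectory run backwards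
from `y`. -/
theorem walkPath_revSteps {x y : G} {n : ℕ} {ω : Fin n → G} (h : walkPath x ω n = y) (k : ℕ) :
    walkPath y (revSteps ω) k = walkPath x ω (n - k) := by
  rw [walkPath_end] at h
  have h2 : ((List.ofFn ω).take (n - k)).prod * ((List.ofFn ω).drop (n - k)).prod
      = (List.ofFn ω).prod := by
    rw [← List.prod_append, List.take_append_drop]
  have h3 : (((List.ofFn (revSteps ω)).take k)).prod = ((List.ofFn ω).drop (n - k)).prod⁻¹ := by
    rw [ofFn_revSteps, List.prod_inv_reverse, List.take_reverse]
    simp [List.map_drop]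
  unfold walkPath
  rw [h3, ← h, ← h2]
  group

theorem stepWeight_revSteps {μ : G → ℝ} (hμ : IsSymmProb μ) {n : ℕ} (ω : Fin n → G) :
    stepWeight μ (revSteps ω) = stepWeight μ ω := by
  unfold stepWeight
  rw [← Equiv.prod_comp Fin.revPerm (fun j => μ (ω j))]
  exact Finset.prod_congr rfl fun i _ => hμ.2.2.2 _

end Path

/-! ### Markov property and reversal for walk probabilities -/

section Main

variable {G : Type*} [Group G] {μ : G → ℝ}

/-- The `q`-step transition probability, as a sum over trajectories, is the convolution power. -/
theorem tsum_endpoint_eq_convPow (hμ : IsSymmProb μ) (q : ℕ) (z : G) :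
    ∑' ω : Fin q → G, Set.indicator {ω : Fin q → G | walkPath 1 ω q = z}
      (fun ω => stepWeight μ ω) ω = convPow μ q z := by
  induction q generalizing z with
  | zero =>
    rw [tsum_fintype, Fintype.sum_unique]
    by_cases h : z = 1 <;> simp [convPow, walkPath, stepWeight, Set.indicator, h, eq_comm]
  | succ q ih =>
    have hμ1 : ∀ g, μ g ≤ 1 := fun g => by
      rw [← hμ.2.2.1]; exact hμ.2.1.le_tsum g fun j _ => hμ.1 j
    rw [← (Fin.snocEquiv (fun _ : Fin (q + 1) => G)).tsum_eq,
      ← (Equiv.prodComm (Fin q → G) G).tsum_eq]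
    rw [Summable.tsum_prod]
    swap
    · have h := summable_indicator_stepWeight hμ
        {ω : Fin (q + 1) → G | walkPath 1 ω (q + 1) = z}
      rw [← (Fin.snocEquiv (fun _ : Fin (q + 1) => G)).summable_iff,
        ← (Equiv.prodComm (Fin q → G) G).summable_iff] at h
      exact h
    -- The last step is forced by the position at time `q`.
    have h1 : ∀ b : Fin q → G, ∑' g : G,
        Set.indicator {ω : Fin (q + 1) → G | walkPath 1 ω (q + 1) = z}
          (fun ω => stepWeight μ ω) (Fin.snocEquiv (fun _ : Fin (q + 1) => G)
            (Equiv.prodComm (Fin q → G) G (b, g)))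
        = stepWeight μ b * μ ((walkPath 1 b q)⁻¹ * z) := by
      intro b
      rw [tsum_eq_single ((walkPath 1 b q)⁻¹ * z)]
      · change Set.indicator _ _ (Fin.snoc b ((walkPath 1 b q)⁻¹ * z) : Fin (q + 1) → G) = _
        rw [Set.indicator_of_mem, stepWeight_snoc]
        simp [walkPath_snoc_end]
      · intro g hg
        change Set.indicator _ _ (Fin.snoc b g : Fin (q + 1) → G) = _
        rw [Set.indicator_of_notMem]
        simp only [Set.mem_ofPred_eq, walkPath_snoc_end]
        exact fun h => hg (by rw [← h]; group)
    simp_rw [h1]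
    -- Regroup the trajectories according to their position at time `q`.
    have hs : Summable fun b : Fin q → G => stepWeight μ b * μ ((walkPath 1 b q)⁻¹ * z) :=
      Summable.of_nonneg_of_le (fun b => mul_nonneg (stepWeight_nonneg hμ b) (hμ.1 _))
        (fun b => mul_le_of_le_one_right (stepWeight_nonneg hμ b) (hμ1 _))
        (summable_stepWeight hμ q)
    rw [← (hs.hasSum.tsum_fiberwise fun b => walkPath 1 b q).tsum_eq]
    change _ = ∑' y, convPow μ q y * μ (y⁻¹ * z)
    refine tsum_congr fun y => ?_
    rw [← ih y, tsum_subtype ((fun b : Fin q → G => walkPath 1 b q) ⁻¹' {y})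
      (fun b : Fin q → G => stepWeight μ b * μ ((walkPath 1 b q)⁻¹ * z)), ← tsum_mul_right]
    refine tsum_congr fun b => ?_
    by_cases h : walkPath 1 b q = y <;> simp [Set.indicator, h]

/-- Markov property at time `p`: to hit a far set by time `p` and end at `y`, the walk must make a
large excursion within `p` steps and then reach `y` in `q` steps. -/
theorem walkProb_early_hit_le (hμ : IsSymmProb μ) (N : G → ℝ) (p q : ℕ) (x y : G) (S : Set G)
    (r B : ℝ) (hB : ∀ z, convPow μ q z ≤ B) (hS : ∀ a ∈ S, r ≤ N (x⁻¹ * a)) :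
    walkProb μ x (p + q) (fun X => X (p + q) = y ∧ ∃ k ≤ p, X k ∈ S) ≤
      walkProb μ 1 p (fun X => ∃ k ≤ p, r ≤ N (X k)) * B := by
  simp only [walkProb_eq]
  have hsum := summable_indicator_stepWeight hμ
    {ω : Fin (p + q) → G | walkPath x ω (p + q) = y ∧ ∃ k ≤ p, walkPath x ω k ∈ S}
  rw [← (Fin.appendEquiv p q).summable_iff] at hsum
  rw [← (Fin.appendEquiv p q).tsum_eq]
  refine (hsum.tsum_prod).trans_le ?_
  rw [← tsum_mul_right]
  refine Summable.tsum_le_tsum (fun a => ?_) hsum.prod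
    ((summable_indicator_stepWeight hμ _).mul_right B)
  by_cases ha : ∃ k ≤ p, walkPath x a k ∈ S
  · have hE : ∃ k ≤ p, r ≤ N (walkPath 1 a k) := by
      obtain ⟨k, hk, h⟩ := ha
      have := hS _ h
      rw [walkPath_eq_mul, inv_mul_cancel_left] at this
      exact ⟨k, hk, this⟩
    rw [Set.indicator_of_mem (s := {ω : Fin p → G | ∃ k ≤ p, r ≤ N (walkPath 1 ω k)}) hE]
    refine le_trans (le_of_eq ?_) (mul_le_mul_of_nonneg_left
      (hB ((walkPath x a p)⁻¹ * y)) (stepWeight_nonneg hμ a))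
    rw [← tsum_endpoint_eq_convPow hμ, ← tsum_mul_left]
    refine tsum_congr fun b => ?_
    change Set.indicator _ _ (Fin.append a b) = _
    have hiff : Fin.append a b ∈ {ω : Fin (p + q) → G | walkPath x ω (p + q) = y ∧
        ∃ k ≤ p, walkPath x ω k ∈ S} ↔ walkPath 1 b q = (walkPath x a p)⁻¹ * y := by
      rw [Set.mem_ofPred_eq, walkPath_append_end, eq_inv_mul_iff_mul_eq]
      refine and_iff_left ?_
      obtain ⟨k, hk, h⟩ := ha
      exact ⟨k, hk, by rwa [walkPath_append_of_le x a b hk]⟩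
    by_cases h : walkPath 1 b q = (walkPath x a p)⁻¹ * y
    · rw [Set.indicator_of_mem (hiff.2 h), Set.indicator_of_mem (by exact h), stepWeight_append]
    · rw [Set.indicator_of_notMem (fun h' => h (hiff.1 h')), Set.indicator_of_notMem (by exact h),
        mul_zero]
  · have hB0 : 0 ≤ B := by
      refine le_trans ?_ (hB 1)
      rw [← tsum_endpoint_eq_convPow hμ]
      exact tsum_nonneg fun ω => Set.indicator_nonneg (fun _ _ => stepWeight_nonneg hμ _) _
    refine le_trans (le_of_eq ?_) (mul_nonneg
      (Set.indicator_nonneg (fun _ _ => stepWeight_nonneg hμ _) _) hB0)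
    rw [← tsum_zero]
    refine tsum_congr fun b => ?_
    change Set.indicator _ _ (Fin.append a b) = _
    rw [Set.indicator_of_notMem]
    rintro ⟨-, k, hk, h⟩
    rw [walkPath_append_of_le x a b hk] at h
    exact ha ⟨k, hk, h⟩

/-- Time reversal: a late visit to `S` on the way from `x` to `y` becomes an early visit on
the way from `y` to `x`, and symmetry of `μ` keeps the weight of each trajectory. -/
theorem walkProb_late_hit_le (hμ : IsSymmProb μ) (p q : ℕ) (x y : G) (S : Set G) :
    walkProb μ x (p + q) (fun X => X (p + q) = y ∧ ∃ k, p ≤ k ∧ k ≤ p + q ∧ X k ∈ S) ≤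
      walkProb μ y (p + q) (fun X => X (p + q) = x ∧ ∃ k ≤ q, X k ∈ S) := by
  simp only [walkProb_eq]
  rw [← (revSteps (G := G) (n := p + q)).tsum_eq (Set.indicator
    {ω : Fin (p + q) → G | walkPath y ω (p + q) = x ∧ ∃ k ≤ q, walkPath y ω k ∈ S} _)]
  refine Summable.tsum_le_tsum (fun ω => ?_) (summable_indicator_stepWeight hμ _)
    ((revSteps (G := G) (n := p + q)).summable_iff.2 (summable_indicator_stepWeight hμ _))
  by_cases h : ω ∈ {ω : Fin (p + q) → G | walkPath x ω (p + q) = y ∧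
      ∃ k, p ≤ k ∧ k ≤ p + q ∧ walkPath x ω k ∈ S}
  · rw [Set.indicator_of_mem h, Set.indicator_of_mem, stepWeight_revSteps hμ]
    obtain ⟨hy, k, hpk, hkn, hk⟩ := h
    refine ⟨?_, p + q - k, by omega, ?_⟩
    · rw [walkPath_revSteps hy]
      simp [walkPath]
    · rw [walkPath_revSteps hy]
      rwa [show p + q - (p + q - k) = k by omega]
  · rw [Set.indicator_of_notMem h]
    exact Set.indicator_nonneg (fun _ _ => stepWeight_nonneg hμ _) _

end Main

/-! ### The bound -/

/-- upper bound on the probability of reaching a far set `A` and being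
at `y` at time `n` (Lemma 6.1 of the paper, axiomatized hypotheses). -/
theorem stmt9 {G : Type*} [Group G] [Countable G]
    (μ : G → ℝ) (hμ : IsSymmProb μ)
    (N : G → ℝ) (hN : IsGroupNorm N)
    (wstar : ℝ) (hw : 0 < wstar)
    (F : ℝ → ℝ) (hFmono : MonotoneOn F (Set.Ici 1))
    (hFpos : ∀ t : ℝ, 1 ≤ t → 0 < F t)
    (C₀ : ℝ) (hC₀ : 0 < C₀)
    (hup : ∀ n : ℕ, 1 ≤ n → ∀ x : G, convPow μ n x ≤ C₀ / F n)
    (A : ℝ) (hA : 1 ≤ A) (hFdbl : ∀ t : ℝ, 1 ≤ t → F (2 * t) ≤ A * F t)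
    (hcontrol : ∀ δ' : ℝ, 0 < δ' → ∃ γ : ℝ, 0 < γ ∧ ∀ n : ℕ, 1 ≤ n →
      walkProb μ 1 n (fun X => ∃ k ≤ n, γ * (n : ℝ) ^ wstar ≤ N (X k)) ≤ δ') :
    ∀ δ : ℝ, 0 < δ → ∃ κ : ℝ, 0 < κ ∧ ∀ n : ℕ, 1 ≤ n → ∀ x y : G, ∀ Aset : Set G,
      (∀ a ∈ Aset, κ * (n : ℝ) ^ wstar ≤ N (x⁻¹ * a)) →
      (∀ a ∈ Aset, κ * (n : ℝ) ^ wstar ≤ N (y⁻¹ * a)) →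
      walkProb μ x n (fun X => X n = y ∧ ∃ k, 1 ≤ k ∧ k ≤ n ∧ X k ∈ Aset) ≤
        δ / F n := by
  intro δ hδ
  have hA0 : 0 < A := by linarith
  obtain ⟨γ, hγ, hctl⟩ := hcontrol (δ / (2 * (C₀ * A ^ 2))) (by positivity)
  refine ⟨γ, hγ, fun n hn x y Aset hx hy => ?_⟩
  have hn0 : (0 : ℝ) < n := by exact_mod_cast hn
  have hr : 0 < γ * (n : ℝ) ^ wstar := mul_pos hγ (Real.rpow_pos_of_pos hn0 _)
  have hn1 : (1 : ℝ) ≤ n := by exact_mod_cast hn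
  have hFn := hFpos n hn1
  have hyA : y ∉ Aset := fun h => by
    have := hy y h
    rw [inv_mul_cancel, hN.2.1] at this
    linarith
  rcases Nat.lt_or_ge n 2 with h2 | h2
  · -- For `n = 1` the only admissible visit would be at the endpoint `y`, which is not in `Aset`.
    obtain rfl : n = 1 := by omega
    have h0 : walkProb μ x 1 (fun X => X 1 = y ∧ ∃ k, 1 ≤ k ∧ k ≤ 1 ∧ X k ∈ Aset) = 0 := by
      rw [walkProb_eq]
      refine (tsum_congr fun ω => ?_).trans tsum_zero
      rw [Set.indicator_of_notMem]
      rintro ⟨h, k, hk1, hk2, hk⟩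
      obtain rfl : k = 1 := le_antisymm hk2 hk1
      exact hyA (h ▸ hk)
    rw [h0]
    positivity
  -- Applying the doubling condition twice compares `F n` with `F` at either half of `n`.
  have hconv : ∀ q : ℕ, 1 ≤ q → n ≤ 4 * q → ∀ z, convPow μ q z ≤ C₀ * A ^ 2 / F n := by
    intro q hq hnq z
    have hq1 : (1 : ℝ) ≤ q := by exact_mod_cast hq
    have hFq := hFpos q hq1
    have hnq' : (n : ℝ) ≤ 2 * (2 * q) := by
      have : (n : ℝ) ≤ 4 * q := by exact_mod_cast hnq
      linarith
    have h1 : F n ≤ F (2 * (2 * q)) := hFmono hn1 (by simp only [Set.mem_Ici]; linarith) hnq'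
    have h3 := hFdbl (2 * q) (by linarith)
    have h4 := mul_le_mul_of_nonneg_left (hFdbl q hq1) hA0.le
    have h5 : F n ≤ A ^ 2 * F q := by nlinarith
    refine (hup q hq z).trans ?_
    rw [div_le_div_iff₀ hFq hFn]
    calc C₀ * F n ≤ C₀ * (A ^ 2 * F q) := mul_le_mul_of_nonneg_left h5 hC₀.le
      _ = C₀ * A ^ 2 * F q := by ring
  have hexc : ∀ p : ℕ, 1 ≤ p → p ≤ n →
      walkProb μ 1 p (fun X => ∃ k ≤ p, γ * (n : ℝ) ^ wstar ≤ N (X k)) ≤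
        δ / (2 * (C₀ * A ^ 2)) := by
    intro p hp hpn
    refine (walkProb_mono hμ ?_).trans (hctl p hp)
    rintro ω ⟨k, hk, h⟩
    refine ⟨k, hk, le_trans ?_ h⟩
    have hpn' : (p : ℝ) ≤ n := by exact_mod_cast hpn
    exact mul_le_mul_of_nonneg_left (Real.rpow_le_rpow (by positivity) hpn' hw.le) hγ.le
  have hhalf : ∀ p q : ℕ, 1 ≤ p → 1 ≤ q → n = p + q → n ≤ 4 * q → ∀ u v : G,
      (∀ a ∈ Aset, γ * (n : ℝ) ^ wstar ≤ N (u⁻¹ * a)) →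
      walkProb μ u n (fun X => X n = v ∧ ∃ k ≤ p, X k ∈ Aset) ≤ δ / 2 / F n := by
    intro p q hp hq hpq hnq u v hu
    have h1 := walkProb_early_hit_le hμ N p q u v Aset _ _ (hconv q hq hnq) hu
    rw [← hpq] at h1
    refine h1.trans ((mul_le_mul_of_nonneg_right (hexc p hp (by omega))
      (by positivity)).trans (le_of_eq ?_))
    field_simp
  obtain ⟨p, q, hp, hq, hpq, hnp, hnq⟩ : ∃ p q : ℕ, 1 ≤ p ∧ 1 ≤ q ∧ n = p + q ∧
      n ≤ 4 * p ∧ n ≤ 4 * q := ⟨n / 2, n - n / 2, by omega, by omega, by omega, by omega, by omega⟩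
  have hearly := hhalf p q hp hq hpq hnq x y hx
  have hlate := hhalf q p hq hp (by omega) hnp y x hy
  have hrev := walkProb_late_hit_le hμ p q x y Aset
  rw [← hpq] at hrev
  calc walkProb μ x n (fun X => X n = y ∧ ∃ k, 1 ≤ k ∧ k ≤ n ∧ X k ∈ Aset)
      ≤ walkProb μ x n (fun X => (X n = y ∧ ∃ k ≤ p, X k ∈ Aset) ∨
          (X n = y ∧ ∃ k, p ≤ k ∧ k ≤ n ∧ X k ∈ Aset)) := by
        refine walkProb_mono hμ ?_
        rintro ω ⟨h, k, -, hkn, hk⟩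
        rcases le_total k p with hkp | hkp
        · exact Or.inl ⟨h, k, hkp, hk⟩
        · exact Or.inr ⟨h, k, hkp, hkn, hk⟩
    _ ≤ δ / 2 / F n + δ / 2 / F n :=
        (walkProb_or_le hμ _ _ _ _).trans (add_le_add hearly (hrev.trans hlate))
    _ = δ / F n := by ring
end
end
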